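/- Let k be a field, n ≥ 1 and d ≥ 1 natural numbers, and let I be a nonzero ideal of k[x_1,…,x_n] generated by polynomials of total degree at most d. Then the saturation of I by the multiplicative set k[x_1]∖{0}, namely the ideal {a ∈ k[x_1,…,x_n] : there exists a nonzero s ∈ k[x_1] with s·a ∈ I}, is generated by polynomials of total degree at most 2^(n·2^(n+3))·d^(n·2^(2n+1)). -/

import Mathlib

/-!
Write `A = k[x₁,…,xₙ]`, `I` for the ideal and `J` for its saturation by `k[x₁] ∖ {0}`.

Linear forms `k̄ → k` applied to coefficients map `I·k̄[x]` to `I` and preserve degree bounds, so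
`k` may be taken algebraically closed (`GeneratedInDegreeLE.of_map_algebraMap`). Two bounds are then
combined.

*A single multiplier.* There is `f ≠ 0` in `k[x₁]` of degree at most `(4d)^(2^n)` with `f·J ⊆ I`,
so that `J = I : f` (`exists_polynomialSaturation_eq_colon`). More generally, consider a module `N`
embedded in the cokernel of a matrix over `A` with `p` rows, and killed by some nonzero polynomial
in an endomorphism. Over the fraction field of `A` the minimal polynomial of the endomorphism has
degree at most `p`, and its coefficients lie in `k` because it divides a polynomial over `k`; hence
some nonzero polynomial of degree at most `p` maps `N` into its `A`-torsion
(`EmbedsInCokernel.exists_forall_aeval_smul_mem_torsion'`). A nonzero maximal minor becomes monic in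
one variable after a linear change of coordinates (`exists_respectsDegree_isUnit_leadingCoeff`), and
taking remainders modulo it embeds the torsion into the cokernel of a matrix over a polynomial ring
with one variable less (`EmbedsInCokernel.exists_torsion`). Induction on `n` bounds the degree of
`f` (`EmbedsInCokernel.exists_natDegree_le_torBound`).

*Syzygies.* By the same elimination, the syzygies of a matrix with entries of bounded degree are
generated by syzygies of bounded degree, which is Hermann's theorem (`mem_syzygySpan_syzBound`). The
colon ideal `I : f` consists of the first entries of the syzygies of the row formed by `f` and the
generators of `I`.

The resulting bound `(4·(4d)^(2^n))^(2^n)` is good enough for `d ≥ 2`. For `d = 1` the ideal `I` is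
the unit ideal or the kernel of a map to a polynomial ring, hence prime
(`isPrime_span_of_totalDegree_le_one`), so `J` is `I` or `A`.
-/

section MaximalMinor

open Matrix

variable {A ι γ : Type*}

theorem exists_submatrix_rows_spanning [Fintype ι] [Fintype γ] [Field A] (G : Matrix ι γ A) :
    ∃ r ≤ Fintype.card ι, ∃ L : Fin r → ι, LinearIndependent A (G.submatrix L id).row ∧
      ∀ c : γ → A, G.submatrix L id *ᵥ c = 0 → G *ᵥ c = 0 := by
  obtain ⟨f, hf, hspan, hli⟩ := Submodule.exists_fun_fin_finrank_span_eq A (Set.range G.row)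
  choose L hL using hf
  obtain rfl : (fun a => G.row (L a)) = f := funext hL
  refine ⟨_, finrank_range_le_card G.row, L, hli, fun c hc => funext fun l => ?_⟩
  have hle : Submodule.span A (Set.range fun a => G.row (L a)) ≤
      LinearMap.ker (dotProductBilin A A |>.flip c) := by
    rw [Submodule.span_le]
    rintro _ ⟨a, rfl⟩
    exact congrFun hc a
  exact hle (hspan.ge (Submodule.subset_span ⟨l, rfl⟩))

theorem exists_submatrix_det_ne_zero_of_linearIndependent_row [Finite γ] [Field A]
    {r : ℕ} {G : Matrix (Fin r) γ A} (hG : LinearIndependent A G.row) :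
    ∃ j : Fin r → γ, (G.submatrix id j).det ≠ 0 := by
  have := Fintype.ofFinite γ
  obtain ⟨f, hf, -, hli⟩ := Submodule.exists_fun_fin_finrank_span_eq A (Set.range G.col)
  choose j hj using hf
  obtain rfl : (fun a => G.col (j a)) = f := funext hj
  have hr : Module.finrank A (Submodule.span A (Set.range G.col)) = r := by
    rw [← rank_eq_finrank_span_cols, hG.rank_matrix, Fintype.card_fin]
  let e := finCongr hr
  refine ⟨j ∘ e.symm, ?_⟩
  rw [← isUnit_iff_ne_zero, ← isUnit_iff_isUnit_det, ← linearIndependent_cols_iff_isUnit]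
  exact hli.comp e.symm e.symm.injective

theorem exists_maximal_minor [Fintype ι] [Fintype γ] [CommRing A] [IsDomain A]
    (G : Matrix ι γ A) :
    ∃ r ≤ Fintype.card ι, ∃ (L : Fin r → ι) (j : Fin r → γ), (G.submatrix L j).det ≠ 0 ∧
      ∀ c : γ → A, G.submatrix L id *ᵥ c = 0 → G *ᵥ c = 0 := by
  let f := algebraMap A (FractionRing A)
  have hf : Function.Injective f := IsFractionRing.injective A (FractionRing A)
  obtain ⟨r, hr, L, hli, hL⟩ := exists_submatrix_rows_spanning (G.map f)
  obtain ⟨j, hj⟩ := exists_submatrix_det_ne_zero_of_linearIndependent_row hli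
  refine ⟨r, hr, L, j, fun h => hj ?_, fun c hc => funext fun l => hf ?_⟩
  · have := congrArg f h
    rwa [RingHom.map_det, map_zero] at this
  · rw [RingHom.map_mulVec, Pi.zero_apply, map_zero, hL (f ∘ c), Pi.zero_apply]
    ext a
    exact (RingHom.map_mulVec f (G.submatrix L id) c a).symm.trans (by simp [hc])

end MaximalMinor

section DegreeDet

variable {R σ ι : Type*} [CommRing R] [Fintype ι] [DecidableEq ι] {d : ℕ}

theorem natDegree_det_le_of_forall_le {M : Matrix ι ι (Polynomial R)}
    (hM : ∀ i j, (M i j).natDegree ≤ d) : M.det.natDegree ≤ Fintype.card ι * d := by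
  rw [Matrix.det_apply]
  refine Polynomial.natDegree_sum_le_of_forall_le _ _ fun τ _ => ?_
  calc (Equiv.Perm.sign τ • ∏ i, M (τ i) i).natDegree
      ≤ ∑ i, (M (τ i) i).natDegree :=
        (Polynomial.natDegree_smul_le _ _).trans (Polynomial.natDegree_prod_le _ _)
    _ ≤ Fintype.card ι * d := Finset.sum_le_card_nsmul _ _ d fun i _ => hM _ _

theorem natDegree_adjugate_le_of_forall_le {M : Matrix ι ι (Polynomial R)}
    (hM : ∀ i j, (M i j).natDegree ≤ d) (a b : ι) :
    (M.adjugate a b).natDegree ≤ Fintype.card ι * d := by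
  rw [Matrix.adjugate_apply]
  refine natDegree_det_le_of_forall_le fun i j => ?_
  rw [Matrix.updateRow_apply, Pi.single_apply]
  split_ifs <;> simp [hM]

theorem totalDegree_det_le_of_forall_le {M : Matrix ι ι (MvPolynomial σ R)}
    (hM : ∀ i j, (M i j).totalDegree ≤ d) : M.det.totalDegree ≤ Fintype.card ι * d := by
  rw [Matrix.det_apply]
  refine MvPolynomial.totalDegree_finsetSum_le fun τ _ => ?_
  calc (Equiv.Perm.sign τ • ∏ i, M (τ i) i).totalDegree
      ≤ ∑ i, (M (τ i) i).totalDegree :=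
        (MvPolynomial.totalDegree_smul_le _ _).trans (MvPolynomial.totalDegree_finsetProd _ _)
    _ ≤ Fintype.card ι * d := Finset.sum_le_card_nsmul _ _ d fun i _ => hM _ _

theorem totalDegree_adjugate_le_of_forall_le {M : Matrix ι ι (MvPolynomial σ R)}
    (hM : ∀ i j, (M i j).totalDegree ≤ d) (a b : ι) :
    (M.adjugate a b).totalDegree ≤ Fintype.card ι * d := by
  rw [Matrix.adjugate_apply]
  refine totalDegree_det_le_of_forall_le fun i j => ?_
  rw [Matrix.updateRow_apply, Pi.single_apply]
  split_ifs <;> simp [hM]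

end DegreeDet

section Cramer

open Matrix

variable {A κ γ : Type*} [CommRing A] [Fintype κ] [DecidableEq κ] [DecidableEq γ]

/-- The matrix producing, by Cramer's rule for the columns `j` of `G`, a solution `y` of
`G y = δ w`, where `δ` is the determinant of these columns. -/
def cramerLift (G : Matrix κ γ A) (j : κ → γ) : Matrix γ κ A :=
  (1 : Matrix γ γ A).submatrix id j * (G.submatrix id j).adjugate

/-- The matrix whose columns are the syzygies of `G` provided by Cramer's rule for the columns
`j`. -/
def cramerSyzygy (G : Matrix κ γ A) (j : κ → γ) : Matrix γ γ A :=
  (G.submatrix id j).det • 1 - cramerLift G j * G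

theorem map_cramerSyzygy {B : Type*} [CommRing B] (f : A →+* B) (G : Matrix κ γ A) (j : κ → γ) :
    (cramerSyzygy G j).map f = cramerSyzygy (G.map f) j := by
  have hdet := f.map_det (G.submatrix id j)
  have hadj := fun x y => congrFun₂ (f.map_adjugate (G.submatrix id j)) x y
  ext a b
  simp_all [cramerSyzygy, cramerLift, mul_apply, one_apply, apply_ite f, submatrix_map]

variable [Fintype γ]

theorem mul_cramerLift (G : Matrix κ γ A) (j : κ → γ) :
    G * cramerLift G j = (G.submatrix id j).det • 1 := by
  rw [cramerLift, ← Matrix.mul_assoc, ← mul_adjugate]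
  exact congrArg (· * _) (mul_submatrix_one (Equiv.refl γ) j G)

theorem mul_cramerSyzygy (G : Matrix κ γ A) (j : κ → γ) : G * cramerSyzygy G j = 0 := by
  rw [cramerSyzygy, Matrix.mul_sub, ← Matrix.mul_assoc, mul_cramerLift, Matrix.mul_smul,
    Matrix.smul_mul, Matrix.mul_one, Matrix.one_mul, sub_self]

end Cramer

theorem det_smul_mem_range_mulVecLin {A κ γ : Type*} [CommRing A] [Fintype κ] [DecidableEq κ]
    [Fintype γ] (G : Matrix κ γ A) (j : κ → γ) (w : κ → A) :
    (G.submatrix id j).det • w ∈ LinearMap.range G.mulVecLin := by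
  classical
  refine ⟨(cramerLift G j).mulVec w, ?_⟩
  rw [Matrix.mulVecLin_apply, Matrix.mulVec_mulVec, mul_cramerLift, Matrix.smul_mulVec,
    Matrix.one_mulVec]

theorem totalDegree_cramerSyzygy_le {R σ κ γ : Type*} [CommRing R] [Fintype κ] [DecidableEq κ]
    [DecidableEq γ] {d : ℕ} {G : Matrix κ γ (MvPolynomial σ R)}
    (hG : ∀ l i, (G l i).totalDegree ≤ d) (j : κ → γ) (a b : γ) :
    (cramerSyzygy G j a b).totalDegree ≤ (Fintype.card κ + 1) * d := by
  have hH : ∀ l i, (G.submatrix id j l i).totalDegree ≤ d := fun l i => hG l (j i)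
  have hlift : ∀ l, (cramerLift G j a l).totalDegree ≤ Fintype.card κ * d := fun l => by
    refine MvPolynomial.totalDegree_finsetSum_le fun i _ => ?_
    simp only [Matrix.submatrix_apply, Matrix.one_apply, ite_mul, one_mul, zero_mul]
    split_ifs
    · exact totalDegree_adjugate_le_of_forall_le hH i l
    · simp
  refine (MvPolynomial.totalDegree_sub _ _).trans (max_le ?_ ?_)
  · rw [Matrix.smul_apply, Matrix.one_apply, smul_eq_mul, mul_ite, mul_one, mul_zero]
    split_ifs
    · exact (totalDegree_det_le_of_forall_le hH).trans (Nat.mul_le_mul_right d (Nat.le_succ _))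
    · simp
  · refine MvPolynomial.totalDegree_finsetSum_le fun l _ => ?_
    exact (MvPolynomial.totalDegree_mul _ _).trans
      ((add_le_add (hlift l) (hG l b)).trans_eq (Nat.succ_mul _ _).symm)

section Division

open Matrix Polynomial

variable {R κ γ : Type*} [CommRing R] {d e : ℕ}

theorem natDegree_mulVec_le [Fintype γ] {G : Matrix κ γ R[X]} {c : γ → R[X]}
    (hG : ∀ l i, (G l i).natDegree ≤ d) (hc : ∀ i, (c i).natDegree ≤ e) (l : κ) :
    ((G *ᵥ c) l).natDegree ≤ d + e :=
  natDegree_sum_le_of_forall_le _ _ fun i _ =>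
    natDegree_mul_le.trans (add_le_add (hG l i) (hc i))

theorem exists_monic_C_mul {p : R[X]} (hp : IsUnit p.leadingCoeff) : ∃ a : R, (C a * p).Monic := by
  obtain ⟨a, ha⟩ := hp.exists_left_inv
  exact ⟨a, monic_C_mul_of_mul_leadingCoeff_eq_one ha⟩

theorem exists_natDegree_sub_mul_le {p : R[X]} (hp : IsUnit p.leadingCoeff) (c : R[X]) :
    ∃ q, (c - p * q).natDegree ≤ p.natDegree := by
  obtain ⟨a, hm⟩ := exists_monic_C_mul hp
  have hrem : c - p * (C a * (c /ₘ (C a * p))) = c %ₘ (C a * p) := by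
    linear_combination -(modByMonic_add_div c (C a * p))
  exact ⟨_, hrem ▸ (natDegree_modByMonic_le _ hm).trans (natDegree_C_mul_le _ _)⟩

variable [Fintype κ] [DecidableEq κ] [IsDomain R]

theorem natDegree_le_of_natDegree_mulVec_le {H : Matrix κ κ R[X]} {c : κ → R[X]}
    (hH : ∀ a b, (H a b).natDegree ≤ d) (hdet : H.det ≠ 0)
    (hc : ∀ l, ((H *ᵥ c) l).natDegree ≤ H.det.natDegree + e) (b : κ) :
    (c b).natDegree ≤ Fintype.card κ * d + e := by
  obtain hb | hb := eq_or_ne (c b) 0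
  · simp [hb]
  have hcramer : (H.adjugate *ᵥ (H *ᵥ c)) b = H.det * c b := by
    rw [mulVec_mulVec, adjugate_mul, smul_mulVec, one_mulVec, Pi.smul_apply, smul_eq_mul]
  have hle := natDegree_mulVec_le (natDegree_adjugate_le_of_forall_le hH) hc b
  rw [hcramer, natDegree_mul hdet hb] at hle
  omega

theorem exists_natDegree_sub_cramerSyzygy_mulVec_le [Fintype γ] [DecidableEq γ]
    {G : Matrix κ γ R[X]} (hG : ∀ l i, (G l i).natDegree ≤ d) {j : κ → γ}
    (hu : IsUnit (G.submatrix id j).det.leadingCoeff) {c : γ → R[X]}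
    (hc : ∀ l, ((G *ᵥ c) l).natDegree ≤ (G.submatrix id j).det.natDegree) :
    ∃ q : γ → R[X],
      ∀ i, ((c - cramerSyzygy G j *ᵥ q) i).natDegree ≤ (Fintype.card κ + 1) * d := by
  set H := G.submatrix id j
  have hH : ∀ a b, (H a b).natDegree ≤ d := fun a b => hG a (j b)
  choose q hq using fun i => exists_natDegree_sub_mul_le hu (c i)
  -- The columns `j` absorb the multiples of the minor, with coefficients `y`.
  set y := H.adjugate *ᵥ (G *ᵥ q) with hy
  have hrem : ∀ i, ((c - H.det • q) i).natDegree ≤ H.det.natDegree := hq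
  have hHy : H *ᵥ y = G *ᵥ c - G *ᵥ (c - H.det • q) := by
    rw [hy, mulVec_mulVec, mul_adjugate, smul_mulVec, one_mulVec, mulVec_sub, mulVec_smul]
    abel
  have hydeg : ∀ b, (y b).natDegree ≤ Fintype.card κ * d + d := by
    refine natDegree_le_of_natDegree_mulVec_le hH (fun h => by simp [h] at hu) fun l => ?_
    rw [hHy, add_comm]
    exact (natDegree_sub_le _ _).trans
      (max_le ((hc l).trans (Nat.le_add_left _ _)) (natDegree_mulVec_le hG hrem l))
  have hsplit : c - cramerSyzygy G j *ᵥ q =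
      (c - H.det • q) + (1 : Matrix γ γ R[X]).submatrix id j *ᵥ y := by
    rw [cramerSyzygy, cramerLift, sub_mulVec, smul_mulVec, one_mulVec, ← mulVec_mulVec,
      ← mulVec_mulVec]
    abel
  refine ⟨q, fun i => ?_⟩
  rw [hsplit]
  refine (natDegree_add_le _ _).trans (max_le ((hrem i).trans ?_) ?_)
  · exact (natDegree_det_le_of_forall_le hH).trans (Nat.mul_le_mul_right d (Nat.le_succ _))
  · rw [add_mul, one_mul, ← zero_add (Fintype.card κ * d + d)]
    refine natDegree_mulVec_le (fun i b => ?_) hydeg i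
    rw [submatrix_apply, one_apply]
    split_ifs <;> simp

end Division

section CoeffMatrix

open Matrix Polynomial

variable {R κ γ : Type*} [CommRing R] {d s e : ℕ}

/-- The coefficients in degrees `< s` of the entries of a vector of polynomials. -/
noncomputable def coeffVec (γ R : Type*) [CommRing R] (s : ℕ) :
    (γ → R[X]) →ₗ[R] (γ × Fin s → R) :=
  LinearMap.pi fun y => lcoeff R y.2 ∘ₗ LinearMap.proj y.1

/-- The vector of polynomials of degree `< s` with prescribed coefficients. -/
noncomputable def ofCoeffVec (γ R : Type*) [CommRing R] (s : ℕ) :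
    (γ × Fin s → R) →ₗ[R] (γ → R[X]) :=
  LinearMap.pi fun i => ∑ t : Fin s, monomial t ∘ₗ LinearMap.proj (i, t)

/-- The matrix over `R` of multiplication by `G`, from vectors of polynomials of degree `< s` to
the coefficients in degrees `< e` of their images. -/
noncomputable def coeffMatrix (G : Matrix κ γ R[X]) (s e : ℕ) : Matrix (κ × Fin e) (γ × Fin s) R :=
  Matrix.of fun x y => (G x.1 y.1 * X ^ (y.2 : ℕ)).coeff x.2

theorem coeffVec_apply (c : γ → R[X]) (y : γ × Fin s) :
    coeffVec γ R s c y = (c y.1).coeff y.2 := rfl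

theorem ofCoeffVec_apply (v : γ × Fin s → R) (i : γ) :
    ofCoeffVec γ R s v i = ∑ t : Fin s, monomial t (v (i, t)) := by
  simp [ofCoeffVec]

theorem ofCoeffVec_smul (a : R) (v : γ × Fin s → R) :
    ofCoeffVec γ R s (a • v) = (C a : R[X]) • ofCoeffVec γ R s v := by
  ext1 i
  rw [map_smul, Pi.smul_apply, Pi.smul_apply, smul_eq_C_mul, smul_eq_mul]

theorem coeffMatrix_mulVec [Fintype γ] (G : Matrix κ γ R[X]) (v : γ × Fin s → R) :
    coeffMatrix G s e *ᵥ v = coeffVec κ R e (G *ᵥ ofCoeffVec γ R s v) := by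
  ext x
  simp only [mulVec, dotProduct, coeffMatrix, of_apply, coeffVec_apply, ofCoeffVec_apply,
    Fintype.sum_prod_type, finsetSum_coeff, Finset.mul_sum, ← C_mul_X_pow_eq_monomial]
  refine Finset.sum_congr rfl fun i _ => Finset.sum_congr rfl fun t _ => ?_
  rw [mul_left_comm, coeff_C_mul, mul_comm]

theorem natDegree_ofCoeffVec_le (v : γ × Fin (s + 1) → R) (i : γ) :
    (ofCoeffVec γ R (s + 1) v i).natDegree ≤ s := by
  rw [ofCoeffVec_apply]
  exact natDegree_sum_le_of_forall_le _ _ fun t _ =>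
    (natDegree_monomial_le _).trans (Nat.le_of_lt_succ t.2)

theorem ofCoeffVec_coeffVec {c : γ → R[X]} (hc : ∀ i, (c i).natDegree ≤ s) :
    ofCoeffVec γ R (s + 1) (coeffVec γ R (s + 1) c) = c := by
  ext1 i
  rw [ofCoeffVec_apply, (c i).as_sum_range' (s + 1) (Nat.lt_succ_of_le (hc i)), Finset.sum_range]
  rfl

theorem mulVec_ofCoeffVec_eq_iff [Fintype γ] {G : Matrix κ γ R[X]}
    (hG : ∀ l i, (G l i).natDegree ≤ d) {w : κ → R[X]} (hw : ∀ l, (w l).natDegree ≤ s + d)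
    (v : γ × Fin (s + 1) → R) :
    coeffMatrix G (s + 1) (s + d + 1) *ᵥ v = coeffVec κ R (s + d + 1) w ↔
      G *ᵥ ofCoeffVec γ R (s + 1) v = w := by
  have hGv := fun l => (natDegree_mulVec_le hG (natDegree_ofCoeffVec_le v) l).trans_eq (add_comm ..)
  rw [coeffMatrix_mulVec]
  refine ⟨fun h => ?_, congrArg _⟩
  rw [← ofCoeffVec_coeffVec hGv, h, ofCoeffVec_coeffVec hw]

theorem exists_coeffMatrix_mulVec_eq [IsDomain R] [Fintype κ] [DecidableEq κ] [Fintype γ]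
    [DecidableEq γ] {G : Matrix κ γ R[X]} (hG : ∀ l i, (G l i).natDegree ≤ d) {j : κ → γ}
    (hu : IsUnit (G.submatrix id j).det.leadingCoeff) (hs : (Fintype.card κ + 1) * d ≤ s)
    {c : γ → R[X]} (hc : ∀ l, ((G *ᵥ c) l).natDegree ≤ (G.submatrix id j).det.natDegree) :
    ∃ (q : γ → R[X]) (v : γ × Fin (s + 1) → R),
      c = cramerSyzygy G j *ᵥ q + ofCoeffVec γ R (s + 1) v ∧
        coeffMatrix G (s + 1) e *ᵥ v = coeffVec κ R e (G *ᵥ c) := by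
  obtain ⟨q, hq⟩ := exists_natDegree_sub_cramerSyzygy_mulVec_le hG hu hc
  have hv := ofCoeffVec_coeffVec fun i => (hq i).trans hs
  refine ⟨q, coeffVec γ R (s + 1) (c - cramerSyzygy G j *ᵥ q), ?_, ?_⟩
  · rw [hv, add_sub_cancel]
  · rw [coeffMatrix_mulVec, hv, mulVec_sub, mulVec_mulVec, mul_cramerSyzygy, zero_mulVec, sub_zero]

section Cokernel

variable [IsDomain R] [Fintype κ] [DecidableEq κ] [Fintype γ] {G : Matrix κ γ R[X]} {j : κ → γ}

theorem coeffVec_mem_range_coeffMatrix_iff (hG : ∀ l i, (G l i).natDegree ≤ d)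
    (hu : IsUnit (G.submatrix id j).det.leadingCoeff) (hs : (Fintype.card κ + 1) * d ≤ s)
    {w : κ → R[X]} (hw : ∀ l, (w l).natDegree ≤ (G.submatrix id j).det.natDegree) :
    coeffVec κ R (s + d + 1) w ∈
        LinearMap.range (coeffMatrix G (s + 1) (s + d + 1)).mulVecLin ↔
      w ∈ LinearMap.range G.mulVecLin := by
  classical
  have hdet : (G.submatrix id j).det.natDegree ≤ s + d :=
    (natDegree_det_le_of_forall_le fun l b => hG l (j b)).trans
      ((Nat.mul_le_mul_right d (Nat.le_succ _)).trans (hs.trans (Nat.le_add_right s d)))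
  refine ⟨fun ⟨v, hv⟩ => ⟨ofCoeffVec γ R (s + 1) v, ?_⟩, ?_⟩
  · exact (mulVec_ofCoeffVec_eq_iff hG (fun l => (hw l).trans hdet) v).1 hv
  · rintro ⟨c, rfl⟩
    obtain ⟨-, v, -, hv⟩ := exists_coeffMatrix_mulVec_eq (e := s + d + 1) hG hu hs hw
    exact ⟨v, hv⟩

-- The map takes remainders modulo the minor, whose multiples lie in the column space of `G`.
theorem exists_injective_cokernel_coeffMatrix (hG : ∀ l i, (G l i).natDegree ≤ d)
    (hu : IsUnit (G.submatrix id j).det.leadingCoeff) (hs : (Fintype.card κ + 1) * d ≤ s) :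
    ∃ χ : ((κ → R[X]) ⧸ LinearMap.range G.mulVecLin) →ₗ[R]
        (κ × Fin (s + d + 1) → R) ⧸
          LinearMap.range (coeffMatrix G (s + 1) (s + d + 1)).mulVecLin,
      Function.Injective χ := by
  obtain ⟨a, hm⟩ := exists_monic_C_mul hu
  set p := C a * (G.submatrix id j).det with hp
  let rem : (κ → R[X]) →ₗ[R] (κ → R[X]) := (modByMonicHom p).compLeft κ
  have hremdeg : ∀ w l, (rem w l).natDegree ≤ (G.submatrix id j).det.natDegree := fun w l =>
    (natDegree_modByMonic_le (w l) hm).trans (natDegree_C_mul_le _ _)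
  have rem_mem_iff : ∀ w, rem w ∈ LinearMap.range G.mulVecLin ↔
      w ∈ LinearMap.range G.mulVecLin := by
    intro w
    have hw : w = rem w + (G.submatrix id j).det • fun l => C a * (w l /ₘ p) := by
      ext1 l
      simp only [rem, Pi.add_apply, Pi.smul_apply, LinearMap.compLeft_apply, Function.comp_apply,
        modByMonicHom_apply, smul_eq_mul]
      linear_combination -(modByMonic_add_div (w l) p) + (w l /ₘ p) * hp
    conv_rhs => rw [hw]
    exact (Submodule.add_mem_iff_left _ (det_smul_mem_range_mulVecLin G j _)).symm
  have mem_iff : ∀ w, (coeffVec κ R (s + d + 1) ∘ₗ rem) w ∈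
      LinearMap.range (coeffMatrix G (s + 1) (s + d + 1)).mulVecLin ↔
        w ∈ LinearMap.range G.mulVecLin := fun w =>
    (coeffVec_mem_range_coeffMatrix_iff hG hu hs (hremdeg w)).trans (rem_mem_iff w)
  refine ⟨Submodule.mapQ ((LinearMap.range G.mulVecLin).restrictScalars R) _
    (coeffVec κ R (s + d + 1) ∘ₗ rem) (fun w hw => (mem_iff w).2 hw) ∘ₗ
      (Submodule.Quotient.restrictScalarsEquiv R _).symm.toLinearMap,
    (injective_iff_map_eq_zero _).2 fun v hv => ?_⟩
  obtain ⟨w, rfl⟩ := Submodule.Quotient.mk_surjective _ v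
  exact (Submodule.Quotient.mk_eq_zero _).2
    ((mem_iff w).1 ((Submodule.Quotient.mk_eq_zero _).1 hv))

end Cokernel

end CoeffMatrix

section Coordinates

open MvPolynomial

variable {R σ τ : Type*} [CommRing R]

/-- The isomorphism `θ`, which views polynomials as univariate polynomials in a distinguished
coordinate, does not increase total degrees, and neither does its inverse. -/
structure RespectsDegree (θ : MvPolynomial σ R ≃ₐ[R] Polynomial (MvPolynomial τ R)) : Prop where
  totalDegree_coeff_add_le (b : MvPolynomial σ R) (t : ℕ) (h : (θ b).coeff t ≠ 0) :
    ((θ b).coeff t).totalDegree + t ≤ b.totalDegree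
  totalDegree_symm_monomial_le (b : MvPolynomial τ R) (t : ℕ) :
    (θ.symm (Polynomial.monomial t b)).totalDegree ≤ b.totalDegree + t

namespace RespectsDegree

variable {θ : MvPolynomial σ R ≃ₐ[R] Polynomial (MvPolynomial τ R)}

theorem totalDegree_coeff_le (hθ : RespectsDegree θ) (b : MvPolynomial σ R) (t : ℕ) :
    ((θ b).coeff t).totalDegree ≤ b.totalDegree := by
  obtain h | h := eq_or_ne ((θ b).coeff t) 0
  · simp [h]
  · exact (Nat.le_add_right _ t).trans (hθ.totalDegree_coeff_add_le b t h)

theorem natDegree_le (hθ : RespectsDegree θ) (b : MvPolynomial σ R) :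
    (θ b).natDegree ≤ b.totalDegree :=
  Polynomial.natDegree_le_iff_coeff_eq_zero.2 fun t ht => by
    by_contra h
    exact ht.not_ge ((Nat.le_add_left _ _).trans (hθ.totalDegree_coeff_add_le b t h))

theorem isUnit_leadingCoeff {k : Type*} [Field k]
    {θ : MvPolynomial σ k ≃ₐ[k] Polynomial (MvPolynomial τ k)} (hθ : RespectsDegree θ)
    {a : MvPolynomial σ k} (ha : (θ a).coeff a.totalDegree ≠ 0) :
    IsUnit (θ a).leadingCoeff := by
  have hdeg : (θ a).natDegree = a.totalDegree :=
    (hθ.natDegree_le a).antisymm (Polynomial.le_natDegree_of_ne_zero ha)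
  have hconst : ((θ a).coeff a.totalDegree).totalDegree = 0 := by
    have := hθ.totalDegree_coeff_add_le a _ ha
    omega
  rw [Polynomial.leadingCoeff, hdeg]
  rw [totalDegree_eq_zero_iff_eq_C.1 hconst] at ha ⊢
  exact (IsUnit.mk0 _ fun h => ha (by rw [h, C_0])).map C

end RespectsDegree

theorem totalDegree_aeval_le_of_forall_le_one {f : σ → MvPolynomial τ R}
    (hf : ∀ i, (f i).totalDegree ≤ 1) (a : MvPolynomial σ R) :
    (aeval f a).totalDegree ≤ a.totalDegree := by
  rw [aeval_def, eval₂_eq]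
  refine totalDegree_finsetSum_le fun m hm => ?_
  calc _ ≤ (algebraMap R (MvPolynomial τ R) (coeff m a)).totalDegree +
          (∏ i ∈ m.support, f i ^ m i).totalDegree := totalDegree_mul _ _
    _ = (∏ i ∈ m.support, f i ^ m i).totalDegree := by
        rw [algebraMap_eq, totalDegree_C, zero_add]
    _ ≤ ∑ i ∈ m.support, (f i ^ m i).totalDegree := totalDegree_finsetProd _ _
    _ ≤ ∑ i ∈ m.support, m i := Finset.sum_le_sum fun i _ =>
        (totalDegree_pow _ _).trans ((Nat.mul_le_mul_left _ (hf i)).trans_eq (mul_one _))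
    _ ≤ a.totalDegree := le_totalDegree hm

/-- The linear change of coordinates `x₀ ↦ x₀`, `xᵢ ↦ xᵢ + cᵢ x₀`. -/
noncomputable def shearHom {n : ℕ} (c : Fin n → R) :
    MvPolynomial (Fin (n + 1)) R →ₐ[R] MvPolynomial (Fin (n + 1)) R :=
  aeval (Fin.cons (X 0) fun i => X i.succ + C (c i) * X 0)

theorem shearHom_comp_neg {n : ℕ} (c : Fin n → R) :
    (shearHom c).comp (shearHom (-c)) = AlgHom.id R _ := by
  ext1 i
  refine Fin.cases ?_ (fun i => ?_) i
  · simp [shearHom]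
  · simp [shearHom, algHom_C]

theorem totalDegree_shearHom_le [Nontrivial R] {n : ℕ} (c : Fin n → R)
    (a : MvPolynomial (Fin (n + 1)) R) : (shearHom c a).totalDegree ≤ a.totalDegree := by
  refine totalDegree_aeval_le_of_forall_le_one (fun i => ?_) a
  refine Fin.cases (by simp) (fun i => ?_) i
  refine (totalDegree_add _ _).trans (max_le (totalDegree_X _).le ?_)
  exact (totalDegree_mul _ _).trans (by simp)

/-- View a polynomial as a univariate polynomial in `x₀`, after the change of coordinates
`shearHom c`. -/
noncomputable def shearEquiv {n : ℕ} (c : Fin n → R) :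
    MvPolynomial (Fin (n + 1)) R ≃ₐ[R] Polynomial (MvPolynomial (Fin n) R) :=
  (AlgEquiv.ofAlgHom (shearHom c) (shearHom (-c)) (shearHom_comp_neg c)
    (by simpa using shearHom_comp_neg (-c))).trans (finSuccEquiv R n)

theorem finSuccEquiv_symm_monomial {n : ℕ} (t : ℕ) (b : MvPolynomial (Fin n) R) :
    (finSuccEquiv R n).symm (Polynomial.monomial t b) = rename Fin.succ b * X 0 ^ t := by
  have hC : (finSuccEquiv R n).toAlgHom.comp (rename Fin.succ) = Polynomial.CAlgHom :=
    algHom_ext fun i => by simp [finSuccEquiv_X_succ]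
  rw [AlgEquiv.symm_apply_eq, map_mul, map_pow, finSuccEquiv_X_zero,
    ← Polynomial.C_mul_X_pow_eq_monomial]
  exact congrArg (· * _) (DFunLike.congr_fun hC b).symm

theorem respectsDegree_shearEquiv [Nontrivial R] {n : ℕ} (c : Fin n → R) :
    RespectsDegree (shearEquiv c) where
  totalDegree_coeff_add_le b t h :=
    (totalDegree_coeff_finSuccEquiv_add_le (shearHom c b) t h).trans (totalDegree_shearHom_le c b)
  totalDegree_symm_monomial_le b t := by
    change (shearHom (-c) ((finSuccEquiv R n).symm (Polynomial.monomial t b))).totalDegree ≤ _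
    refine (totalDegree_shearHom_le _ _).trans ?_
    rw [finSuccEquiv_symm_monomial]
    exact (totalDegree_mul _ _).trans
      (add_le_add (totalDegree_rename_le _ _) (totalDegree_X_pow _ _).le)

theorem aeval_mul_left_of_isHomogeneous {S : Type*} [CommRing S] [Algebra R S] {D : ℕ}
    {P : MvPolynomial σ R} (hP : P.IsHomogeneous D) (t : S) (x : σ → S) :
    aeval (fun i => t * x i) P = t ^ D * aeval x P := by
  rw [aeval_def, aeval_def, eval₂_eq, eval₂_eq, Finset.mul_sum]
  refine Finset.sum_congr rfl fun m hm => ?_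
  simp_rw [mul_pow, Finset.prod_mul_distrib, Finset.prod_pow_eq_pow_sum,
    ← hP.degree_eq_sum_deg_support hm]
  exact mul_left_comm _ _ _

theorem coeff_aeval_X_mul_C (c : σ → R) (a : MvPolynomial σ R) (D : ℕ) :
    (aeval (fun i => Polynomial.X * Polynomial.C (c i)) a : Polynomial R).coeff D =
      eval c (homogeneousComponent D a) := by
  have hcomp : ∀ e, aeval (fun i => Polynomial.X * Polynomial.C (c i))
      (homogeneousComponent e a) =
        Polynomial.X ^ e * Polynomial.C (eval c (homogeneousComponent e a)) := fun e => by
    rw [aeval_mul_left_of_isHomogeneous (homogeneousComponent_isHomogeneous e a)]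
    exact congrArg _ (aeval_algebraMap_apply (Polynomial R) c _)
  conv_lhs => rw [← sum_homogeneousComponent a]
  simp_rw [map_sum, Polynomial.finsetSum_coeff, hcomp, Polynomial.coeff_X_pow_mul',
    Polynomial.coeff_C]
  rw [Finset.sum_eq_single D, if_pos le_rfl, if_pos (Nat.sub_self D)]
  · intro e _ he
    split_ifs <;> first | rfl | omega
  · intro hD
    rw [homogeneousComponent_eq_zero D a (by simpa [Nat.lt_succ_iff] using hD)]
    simp

theorem homogeneousComponent_totalDegree_ne_zero {a : MvPolynomial σ R} (ha : a ≠ 0) :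
    homogeneousComponent a.totalDegree a ≠ 0 := by
  obtain ⟨m, hm, hdeg⟩ := Finset.exists_mem_eq_sup _ (support_nonempty.2 ha) fun m =>
    m.sum fun _ e => e
  refine ne_zero_iff.2 ⟨m, ?_⟩
  rw [coeff_homogeneousComponent, if_pos (show m.degree = a.totalDegree from hdeg.symm)]
  exact mem_support_iff.1 hm

theorem exists_eval_cons_one_ne_zero {k : Type*} [Field k] [Infinite k] {n D : ℕ}
    {P : MvPolynomial (Fin (n + 1)) k} (hP : P.IsHomogeneous D) (hP0 : P ≠ 0) :
    ∃ c : Fin n → k, eval (Fin.cons 1 c) P ≠ 0 := by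
  obtain ⟨x, hx⟩ : ∃ x, eval x (P * X 0) ≠ 0 := by
    by_contra! h
    exact mul_ne_zero hP0 (X_ne_zero 0) (MvPolynomial.funext fun x => by simpa using h x)
  rw [map_mul, eval_X] at hx
  refine ⟨fun i => x i.succ / x 0, fun h => left_ne_zero_of_mul hx ?_⟩
  set y : Fin (n + 1) → k := Fin.cons 1 fun i => x i.succ / x 0
  have hscale : (fun i => x 0 * y i) = x := by
    ext i
    refine Fin.cases (mul_one _) (fun i => ?_) i
    exact mul_div_cancel₀ _ (right_ne_zero_of_mul hx)
  have := aeval_mul_left_of_isHomogeneous hP (x 0) y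
  rw [hscale, aeval_eq_eval] at this
  simpa [h] using this

theorem shearEquiv_X_zero {n : ℕ} (c : Fin n → R) : shearEquiv c (X 0) = Polynomial.X := by
  change finSuccEquiv R n (shearHom c (X 0)) = _
  rw [shearHom, aeval_X, Fin.cons_zero, finSuccEquiv_X_zero]

theorem shearEquiv_X_succ {n : ℕ} (c : Fin n → R) (i : Fin n) :
    shearEquiv c (X i.succ) = Polynomial.C (X i) + Polynomial.C (C (c i)) * Polynomial.X := by
  change finSuccEquiv R n (shearHom c (X i.succ)) = _
  rw [shearHom, aeval_X, Fin.cons_succ, map_add, map_mul, finSuccEquiv_X_zero,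
    finSuccEquiv_X_succ]
  exact congrArg (_ + · * _) ((finSuccEquiv R n).commutes _)

/-- Setting `x₁ = ⋯ = xₙ = 0` after a shear restricts to the line through `(1, c)`. -/
theorem mapAlgHom_aeval_zero_shearEquiv {n : ℕ} (c : Fin n → R)
    (a : MvPolynomial (Fin (n + 1)) R) :
    Polynomial.mapAlgHom (aeval (0 : Fin n → R)) (shearEquiv c a) =
      aeval (fun i => Polynomial.X * Polynomial.C ((Fin.cons 1 c : Fin (n + 1) → R) i)) a := by
  suffices h : (Polynomial.mapAlgHom (aeval (0 : Fin n → R))).comp (shearEquiv c).toAlgHom =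
      aeval fun i => Polynomial.X * Polynomial.C ((Fin.cons 1 c : Fin (n + 1) → R) i) from
    DFunLike.congr_fun h a
  ext1 i
  rw [AlgHom.comp_apply, AlgEquiv.coe_toAlgHom, aeval_X]
  refine Fin.cases ?_ (fun i => ?_) i
  · rw [shearEquiv_X_zero]
    simp
  · rw [shearEquiv_X_succ]
    simp

theorem exists_respectsDegree_isUnit_leadingCoeff {k : Type*} [Field k] [Infinite k] {n : ℕ}
    {a : MvPolynomial (Fin (n + 1)) k} (ha : a ≠ 0) :
    ∃ θ : MvPolynomial (Fin (n + 1)) k ≃ₐ[k] Polynomial (MvPolynomial (Fin n) k),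
      RespectsDegree θ ∧ IsUnit (θ a).leadingCoeff := by
  obtain ⟨c, hc⟩ := exists_eval_cons_one_ne_zero (homogeneousComponent_isHomogeneous _ a)
    (homogeneousComponent_totalDegree_ne_zero ha)
  refine ⟨shearEquiv c, respectsDegree_shearEquiv c,
    (respectsDegree_shearEquiv c).isUnit_leadingCoeff fun h => hc ?_⟩
  rw [← coeff_aeval_X_mul_C, ← mapAlgHom_aeval_zero_shearEquiv, Polynomial.coe_mapAlgHom,
    Polynomial.coeff_map, h, map_zero]

end Coordinates

section Elimination

open Matrix MvPolynomial

variable {k ι κ γ : Type*} [Field k] {n d : ℕ}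

theorem totalDegree_coeffMatrix_le {θ : MvPolynomial (Fin (n + 1)) k ≃ₐ[k]
      Polynomial (MvPolynomial (Fin n) k)} (hθ : RespectsDegree θ)
    {G : Matrix ι γ (MvPolynomial (Fin (n + 1)) k)} (hG : ∀ l i, (G l i).totalDegree ≤ d) {s e : ℕ}
    (x : ι × Fin e) (y : γ × Fin s) : (coeffMatrix (G.map θ) s e x y).totalDegree ≤ d := by
  rw [coeffMatrix, of_apply, Polynomial.coeff_mul_X_pow']
  split_ifs
  · exact (hθ.totalDegree_coeff_le _ _).trans (hG _ _)
  · exact totalDegree_zero.trans_le (Nat.zero_le d)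

theorem exists_minor_isUnit_leadingCoeff [Infinite k] [Fintype ι] [Fintype γ]
    (G : Matrix ι γ (MvPolynomial (Fin (n + 1)) k)) :
    ∃ r ≤ Fintype.card ι, ∃ (L : Fin r → ι) (j : Fin r → γ)
      (θ : MvPolynomial (Fin (n + 1)) k ≃ₐ[k] Polynomial (MvPolynomial (Fin n) k)),
      RespectsDegree θ ∧
        IsUnit (((G.submatrix L id).map θ).submatrix id j).det.leadingCoeff ∧
        ∀ c, G.submatrix L id *ᵥ c = 0 → G *ᵥ c = 0 := by
  obtain ⟨r, hr, L, j, hdet, hL⟩ := exists_maximal_minor G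
  obtain ⟨θ, hθ, hu⟩ := exists_respectsDegree_isUnit_leadingCoeff hdet
  refine ⟨r, hr, L, j, θ, hθ, ?_, hL⟩
  rwa [AlgEquiv.map_det] at hu

end Elimination

section Cokernel

open Matrix

variable {A A' B N ι κ γ : Type*} [CommRing A] [CommRing A'] [CommRing B] [AddCommGroup N]
  [Module B N] [Fintype γ]

/-- The module `N` over `B`, regarded as a module over `A` through `ψ`, embeds into the cokernel
of `G`. -/
def EmbedsInCokernel (ψ : A →+* B) (N : Type*) [AddCommGroup N] [Module B N]
    (G : Matrix ι γ A) : Prop :=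
  ∃ φ : N →+ (ι → A) ⧸ LinearMap.range G.mulVecLin,
    Function.Injective φ ∧ ∀ a v, φ (ψ a • v) = a • φ v

theorem mem_range_mulVecLin_of_smul_mem [IsDomain A] {G : Matrix ι γ A} {L : κ → ι}
    (hL : ∀ c, G.submatrix L id *ᵥ c = 0 → G *ᵥ c = 0) {a : A} (ha : a ≠ 0) {v : ι → A}
    (hav : a • v ∈ LinearMap.range G.mulVecLin)
    (hv : v ∘ L ∈ LinearMap.range (G.submatrix L id).mulVecLin) :
    v ∈ LinearMap.range G.mulVecLin := by
  obtain ⟨c, hc⟩ := hav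
  obtain ⟨b, hb⟩ := hv
  rw [mulVecLin_apply] at hc hb
  have hcb : G *ᵥ (c - a • b) = 0 := by
    refine hL _ ?_
    rw [mulVec_sub, mulVec_smul, hb, sub_eq_zero]
    exact congrArg (· ∘ L) hc
  rw [mulVec_sub, mulVec_smul, hc, ← smul_sub] at hcb
  exact ⟨b, (sub_eq_zero.1 ((smul_eq_zero.1 hcb).resolve_left ha)).symm⟩

namespace EmbedsInCokernel

variable {ψ : A →+* B} {G : Matrix ι γ A}

theorem torsion [IsDomain A] (h : EmbedsInCokernel ψ N G) {L : κ → ι}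
    (hL : ∀ c, G.submatrix L id *ᵥ c = 0 → G *ᵥ c = 0) :
    EmbedsInCokernel ψ (Submodule.torsion' B N ((nonZeroDivisors A).map ψ))
      (G.submatrix L id) := by
  obtain ⟨φ, hφ, hψ⟩ := h
  have hle : LinearMap.range G.mulVecLin ≤
      (LinearMap.range (G.submatrix L id).mulVecLin).comap (LinearMap.funLeft A A L) := by
    rintro _ ⟨c, rfl⟩
    exact ⟨c, rfl⟩
  let π := Submodule.mapQ _ _ (LinearMap.funLeft A A L) hle
  refine ⟨(π.toAddMonoidHom.comp φ).comp (Submodule.subtype _).toAddMonoidHom,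
    (injective_iff_map_eq_zero _).2 ?_, fun a v => ?_⟩
  · rintro ⟨v, ⟨_, a, ha, rfl⟩, hav⟩ hv
    refine Subtype.ext (hφ ?_)
    obtain ⟨w, hw⟩ := Submodule.Quotient.mk_surjective _ (φ v)
    replace hav : a • φ v = 0 := by rw [← hψ]; exact (congrArg φ hav).trans φ.map_zero
    replace hv : π (φ v) = 0 := hv
    change φ v = φ 0
    rw [← hw] at hav hv ⊢
    rw [map_zero]
    exact (Submodule.Quotient.mk_eq_zero _).2 (mem_range_mulVecLin_of_smul_mem hL
      (nonZeroDivisors.ne_zero ha) ((Submodule.Quotient.mk_eq_zero _).1 hav)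
      ((Submodule.Quotient.mk_eq_zero _).1 hv))
  · change π (φ (ψ a • (v : N))) = a • π (φ v)
    rw [hψ, map_smul]

theorem map_ringEquiv (h : EmbedsInCokernel ψ N G) (θ : A ≃+* A') :
    EmbedsInCokernel (ψ.comp θ.symm) N (G.map θ) := by
  obtain ⟨φ, hφ, hψ⟩ := h
  let e : (ι → A) ≃+ (ι → A') := AddEquiv.piCongrRight fun _ => θ.toAddEquiv
  have he : (LinearMap.range G.mulVecLin).toAddSubgroup.map e =
      (LinearMap.range (G.map θ).mulVecLin).toAddSubgroup := by
    ext w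
    constructor
    · rintro ⟨_, ⟨c, rfl⟩, rfl⟩
      exact ⟨θ ∘ c, funext fun l => (RingHom.map_mulVec (θ : A →+* A') G c l).symm⟩
    · rintro ⟨c, rfl⟩
      refine ⟨_, ⟨θ.symm ∘ c, rfl⟩, funext fun l => ?_⟩
      have hc : θ ∘ θ.symm ∘ c = c := funext fun i => θ.apply_symm_apply (c i)
      exact (RingHom.map_mulVec (θ : A →+* A') G (θ.symm ∘ c) l).trans
        (congrArg (fun c => (G.map θ *ᵥ c) l) hc)
  let E : ((ι → A) ⧸ LinearMap.range G.mulVecLin) ≃+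
      ((ι → A') ⧸ LinearMap.range (G.map θ).mulVecLin) := QuotientAddGroup.congr _ _ e he
  have hE : ∀ a v, E (θ.symm a • v) = a • E v := by
    intro a v
    obtain ⟨v, rfl⟩ := Submodule.Quotient.mk_surjective _ v
    refine congrArg (Submodule.Quotient.mk (p := LinearMap.range (G.map θ).mulVecLin)) ?_
    ext l
    simp [e]
  refine ⟨E.toAddMonoidHom.comp φ, E.injective.comp hφ, fun a v => ?_⟩
  exact (congrArg E (hψ _ _)).trans (hE a (φ v))

theorem coeffMatrix {R κ : Type*} [CommRing R] [IsDomain R] [Fintype κ] [DecidableEq κ]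
    {ψ : Polynomial R →+* B} {G : Matrix κ γ (Polynomial R)} {d s : ℕ} {j : κ → γ}
    (h : EmbedsInCokernel ψ N G) (hG : ∀ l i, (G l i).natDegree ≤ d)
    (hu : IsUnit (G.submatrix id j).det.leadingCoeff) (hs : (Fintype.card κ + 1) * d ≤ s) :
    EmbedsInCokernel (ψ.comp Polynomial.C) N (coeffMatrix G (s + 1) (s + d + 1)) := by
  obtain ⟨φ, hφ, hψ⟩ := h
  obtain ⟨χ, hχ⟩ := exists_injective_cokernel_coeffMatrix hG hu hs
  refine ⟨χ.toAddMonoidHom.comp φ, hχ.comp hφ, fun a v => ?_⟩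
  exact (congrArg χ ((hψ _ v).trans (algebraMap_smul (Polynomial R) a (φ v)))).trans
    (χ.map_smul a (φ v))

end EmbedsInCokernel

/-- The number of rows of the coefficient matrix obtained by eliminating one variable from a
matrix with `p` rows and entries of degree at most `d`. -/
def stepSize (d p : ℕ) : ℕ := p * ((p + 1) * d + d + 1)

theorem EmbedsInCokernel.exists_torsion {k : Type*} [Field k] [Infinite k] {n d p : ℕ} [Fintype ι]
    {ψ : MvPolynomial (Fin (n + 1)) k →+* B} {G : Matrix ι γ (MvPolynomial (Fin (n + 1)) k)}
    (h : EmbedsInCokernel ψ N G) (hp : Fintype.card ι ≤ p) (hG : ∀ l i, (G l i).totalDegree ≤ d) :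
    ∃ (r e s : ℕ) (ρ : MvPolynomial (Fin n) k →ₐ[k] MvPolynomial (Fin (n + 1)) k)
      (G' : Matrix (Fin r × Fin e) (γ × Fin s) (MvPolynomial (Fin n) k)),
      r * e ≤ stepSize d p ∧ (∀ l i, (G' l i).totalDegree ≤ d) ∧
        EmbedsInCokernel (ψ.comp ρ)
          (Submodule.torsion' B N ((nonZeroDivisors (MvPolynomial (Fin (n + 1)) k)).map ψ)) G' := by
  obtain ⟨r, hr, L, j, θ, hθ, hu, hL⟩ := exists_minor_isUnit_leadingCoeff G
  have hrp : (Fintype.card (Fin r) + 1) * d ≤ (p + 1) * d := by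
    rw [Fintype.card_fin]
    exact Nat.mul_le_mul_right d (Nat.succ_le_succ (hr.trans hp))
  exact ⟨r, (p + 1) * d + d + 1, (p + 1) * d + 1, θ.symm.toAlgHom.comp Polynomial.CAlgHom, _,
    Nat.mul_le_mul_right _ (hr.trans hp), totalDegree_coeffMatrix_le hθ fun l i => hG (L l) i,
    ((h.torsion hL).map_ringEquiv θ.toRingEquiv).coeffMatrix
      (fun l i => (hθ.natDegree_le _).trans (hG (L l) i)) hu hrp⟩

end Cokernel

section Annihilator

open Polynomial TensorProduct

variable {k A B N : Type*} [Field k] [CommRing A] [CommRing B] [AddCommGroup N]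

theorem exists_map_eq_of_monic_of_dvd_map {K : Type*} [IsAlgClosed k] [Field K] [Algebra k K]
    {s : k[X]} (hs : s ≠ 0) {q : K[X]} (hq : q.Monic) (hqs : q ∣ s.map (algebraMap k K)) :
    ∃ f : k[X], f.map (algebraMap k K) = q := by
  have hqs' : q ∣ (s * C s.leadingCoeff⁻¹).map (algebraMap k K) :=
    hqs.trans (Polynomial.map_dvd _ (dvd_mul_right s _))
  obtain ⟨p, hp⟩ := (mem_lifts _).1
    (integralClosure.mem_lifts_of_monic_of_dvd_map K (monic_mul_leadingCoeff_inv hs) hq hqs')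
  obtain ⟨f, rfl⟩ := Polynomial.map_surjective (algebraMap k (integralClosure k K))
    IsAlgClosed.algebraMap_bijective_of_isIntegral.2 p
  exact ⟨f, by rw [← hp, Polynomial.map_map, ← IsScalarTower.algebraMap_eq]⟩

theorem finrank_tensorProduct_le_card {ι : Type*} [Fintype ι] (K : Type*) [Field K] [Algebra A K]
    [Module.Flat A K] [Module A N] {P : Submodule A (ι → A)} {φ : N →ₗ[A] (ι → A) ⧸ P}
    (hφ : Function.Injective φ) :
    Module.Finite K (K ⊗[A] N) ∧ Module.finrank K (K ⊗[A] N) ≤ Fintype.card ι := by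
  have hsurj : Function.Surjective (P.mkQ.baseChange K) :=
    LinearMap.lTensor_surjective K P.mkQ_surjective
  have hinj : Function.Injective (φ.baseChange K) :=
    Module.Flat.lTensor_preserves_injective_linearMap φ hφ
  refine ⟨Module.Finite.of_injective _ hinj, ?_⟩
  calc Module.finrank K (K ⊗[A] N) ≤ Module.finrank K (K ⊗[A] ((ι → A) ⧸ P)) :=
        LinearMap.finrank_le_finrank_of_injective hinj
    _ ≤ Module.finrank K (K ⊗[A] (ι → A)) := LinearMap.finrank_le_finrank_of_surjective hsurj
    _ = Fintype.card ι := by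
        have := (algebraMap A K).domain_nontrivial
        rw [Module.finrank_baseChange, Module.finrank_fintype_fun_eq_card]

-- Over the fraction field of `A`, the minimal polynomial of multiplication by `x` divides a
-- polynomial over `k`, so its coefficients lie in `k`.
theorem exists_natDegree_le_finrank_forall_smul_aeval_smul_eq_zero [IsAlgClosed k] [IsDomain A]
    [Algebra k A] [Algebra k B] [Algebra A B] [IsScalarTower k A B] [Module A N] [Module B N]
    [IsScalarTower A B N] [Module.Finite (FractionRing A) (FractionRing A ⊗[A] N)] {x : B}
    {s : k[X]} (hs : s ≠ 0) (hsN : ∀ v : N, aeval x s • v = 0) :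
    ∃ f : k[X], f ≠ 0 ∧
      f.natDegree ≤ Module.finrank (FractionRing A) (FractionRing A ⊗[A] N) ∧
      ∀ v : N, ∃ a ∈ nonZeroDivisors A, a • aeval x f • v = 0 := by
  let K := FractionRing A
  let Ξ : B →ₐ[k] Module.End K (K ⊗[A] N) :=
    ((Module.End.baseChangeHom A K N).comp (Algebra.lsmul A A N)).restrictScalars k
  have haeval (f : k[X]) : aeval (Ξ x) (f.map (algebraMap k K)) = Ξ (aeval x f) := by
    rw [aeval_map_algebraMap, aeval_algHom_apply]
  have hΞs : Ξ (aeval x s) = 0 := by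
    have hs0 : Algebra.lsmul A A N (aeval x s) = 0 := LinearMap.ext hsN
    exact (congrArg (Module.End.baseChangeHom A K N) hs0).trans (map_zero _)
  have hint : IsIntegral K (Ξ x) := Algebra.IsIntegral.isIntegral (Ξ x)
  obtain ⟨f, hf⟩ := exists_map_eq_of_monic_of_dvd_map hs (minpoly.monic hint)
    (minpoly.dvd K (Ξ x) ((haeval s).trans hΞs))
  refine ⟨f, ?_, ?_, fun v => ?_⟩
  · rintro rfl
    exact minpoly.ne_zero hint (hf.symm.trans (Polynomial.map_zero _))
  · rw [← natDegree_map (algebraMap k K), hf, ← LinearMap.charpoly_natDegree (Ξ x)]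
    exact natDegree_le_of_dvd (LinearMap.minpoly_dvd_charpoly _)
      (LinearMap.charpoly_monic _).ne_zero
  · have hΞf : Ξ (aeval x f) = 0 := (haeval f).symm.trans (hf ▸ minpoly.aeval K (Ξ x))
    have hv : TensorProduct.mk A K N 1 (aeval x f • v) = 0 :=
      LinearMap.congr_fun hΞf ((1 : K) ⊗ₜ[A] v)
    obtain ⟨a, ha⟩ :=
      (IsLocalizedModule.eq_zero_iff (nonZeroDivisors A) (TensorProduct.mk A K N 1)).1 hv
    exact ⟨a, a.2, ha⟩

theorem torsion'_map_nonZeroDivisors_eq_bot {σ : Type*} [IsEmpty σ]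
    [Module B N] (ψ : MvPolynomial σ k →+* B) :
    Submodule.torsion' B N ((nonZeroDivisors (MvPolynomial σ k)).map ψ) = ⊥ := by
  refine (Submodule.eq_bot_iff _).2 ?_
  rintro v ⟨⟨_, a, ha, rfl⟩, hav⟩
  have hu : IsUnit a := by
    rw [MvPolynomial.eq_C_of_isEmpty a] at ha ⊢
    refine (IsUnit.mk0 _ fun h => nonZeroDivisors.ne_zero ha ?_).map MvPolynomial.C
    rw [h, MvPolynomial.C_0]
  exact (hu.map ψ).smul_eq_zero.1 hav

section EmbedsInCokernel

variable [IsAlgClosed k] [Algebra k B] [Module B N] {x : B} {s : k[X]}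

theorem EmbedsInCokernel.exists_forall_aeval_smul_mem_torsion' {ι γ : Type*} [Fintype ι]
    [Fintype γ] [IsDomain A] [Algebra k A] {ψ : A →ₐ[k] B} {G : Matrix ι γ A}
    (h : EmbedsInCokernel (ψ : A →+* B) N G) (hs : s ≠ 0) (hsN : ∀ v : N, aeval x s • v = 0) :
    ∃ f : k[X], f ≠ 0 ∧ f.natDegree ≤ Fintype.card ι ∧
      ∀ v : N, aeval x f • v ∈
        Submodule.torsion' B N ((nonZeroDivisors A).map (ψ : A →+* B)) := by
  obtain ⟨φ, hφ, hψ⟩ := h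
  let _ : Algebra A B := ψ.toAlgebra
  let _ : Module A N := Module.compHom N (ψ : A →+* B)
  have : IsScalarTower A B N := ⟨fun a b v => mul_smul (ψ a) b v⟩
  have : IsScalarTower k A B := IsScalarTower.of_algHom ψ
  let φ' : N →ₗ[A] (ι → A) ⧸ LinearMap.range G.mulVecLin := { φ with map_smul' := hψ }
  obtain ⟨_, hrank⟩ := finrank_tensorProduct_le_card (FractionRing A) (φ := φ') hφ
  obtain ⟨f, hf0, hfd, hf⟩ :=
    exists_natDegree_le_finrank_forall_smul_aeval_smul_eq_zero (A := A) hs hsN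
  refine ⟨f, hf0, hfd.trans hrank, fun v => (Submodule.mem_torsion'_iff _ _).2 ?_⟩
  obtain ⟨a, ha, hav⟩ := hf v
  exact ⟨⟨ψ a, a, ha, rfl⟩, hav⟩

/-- The degree bound for a polynomial in one element killing a submodule of the cokernel of a
matrix with `p` rows and entries of degree at most `d` in the given number of variables. -/
def torBound (d : ℕ) : ℕ → ℕ → ℕ
  | 0, p => p
  | n + 1, p => p + torBound d n (stepSize d p)

theorem EmbedsInCokernel.exists_natDegree_le_torBound {d n p : ℕ} {ι : Type} {γ : Type*}
    [Fintype ι] [Fintype γ] {ψ : MvPolynomial (Fin n) k →ₐ[k] B}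
    {G : Matrix ι γ (MvPolynomial (Fin n) k)}
    (h : EmbedsInCokernel (ψ : MvPolynomial (Fin n) k →+* B) N G) (hp : Fintype.card ι ≤ p)
    (hG : ∀ l i, (G l i).totalDegree ≤ d) (hs : s ≠ 0) (hsN : ∀ v : N, aeval x s • v = 0) :
    ∃ f : k[X], f ≠ 0 ∧ f.natDegree ≤ torBound d n p ∧ ∀ v : N, aeval x f • v = 0 := by
  have : Infinite k := IsAlgClosed.instInfinite
  induction n generalizing ι γ N p with
  | zero =>
    obtain ⟨f, hf0, hfd, hf⟩ := h.exists_forall_aeval_smul_mem_torsion' hs hsN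
    refine ⟨f, hf0, hfd.trans hp, fun v => ?_⟩
    have hv := hf v
    rwa [torsion'_map_nonZeroDivisors_eq_bot, Submodule.mem_bot] at hv
  | succ n ih =>
    obtain ⟨f, hf0, hfd, hf⟩ := h.exists_forall_aeval_smul_mem_torsion' hs hsN
    obtain ⟨r, e, t, ρ, G', hre, hG', h'⟩ := h.exists_torsion hp hG
    obtain ⟨f', hf'0, hf'd, hf'⟩ := ih (ψ := ψ.comp ρ) h' (by simpa using hre) hG'
      fun v => Subtype.ext (hsN v.1)
    refine ⟨f' * f, mul_ne_zero hf'0 hf0, ?_, fun v => ?_⟩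
    · rw [natDegree_mul hf'0 hf0, torBound, add_comm]
      exact add_le_add (hfd.trans hp) hf'd
    · rw [map_mul, mul_smul]
      exact congrArg Subtype.val (hf' ⟨_, hf v⟩)

end EmbedsInCokernel

end Annihilator

section Syzygies

open Matrix MvPolynomial

variable {R σ τ κ γ : Type*} [CommRing R] [Fintype γ] {d D s : ℕ}

/-- The submodule generated by the syzygies of `G` with entries of degree at most `D`. -/
noncomputable def syzygySpan (G : Matrix κ γ (MvPolynomial σ R)) (D : ℕ) :
    Submodule (MvPolynomial σ R) (γ → MvPolynomial σ R) :=
  Submodule.span _ {c | G *ᵥ c = 0 ∧ ∀ i, (c i).totalDegree ≤ D}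

theorem mulVec_mem_syzygySpan {G : Matrix κ γ (MvPolynomial σ R)}
    {M : Matrix γ γ (MvPolynomial σ R)} (hGM : G * M = 0)
    (hM : ∀ a b, (M a b).totalDegree ≤ D) (q : γ → MvPolynomial σ R) :
    M *ᵥ q ∈ syzygySpan G D := by
  rw [mulVec_eq_sum]
  refine Submodule.sum_mem _ fun b _ => ?_
  rw [op_smul_eq_smul]
  exact Submodule.smul_mem _ _ (Submodule.subset_span
    ⟨funext fun l => congrFun₂ hGM l b, fun a => hM a b⟩)

theorem map_mulVec_comp {A A' : Type*} [CommRing A] [CommRing A'] [Algebra R A] [Algebra R A']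
    (θ : A ≃ₐ[R] A') (G : Matrix κ γ A) (c : γ → A) : G.map θ *ᵥ (θ ∘ c) = θ ∘ (G *ᵥ c) :=
  funext fun l => (RingHom.map_mulVec (θ : A →+* A') G c l).symm

theorem mulVec_symm_comp {A A' : Type*} [CommRing A] [CommRing A'] [Algebra R A] [Algebra R A']
    (θ : A ≃ₐ[R] A') (G : Matrix κ γ A) (w : γ → A') :
    G *ᵥ (θ.symm ∘ w) = θ.symm ∘ (G.map θ *ᵥ w) := by
  have hw : θ ∘ θ.symm ∘ w = w := funext fun i => θ.apply_symm_apply (w i)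
  nth_rw 2 [← hw]
  rw [map_mulVec_comp]
  exact funext fun l => (θ.symm_apply_apply _).symm

theorem symm_comp_ofCoeffVec_mem_syzygySpan
    {θ : MvPolynomial σ R ≃ₐ[R] Polynomial (MvPolynomial τ R)} (hθ : RespectsDegree θ)
    {G : Matrix κ γ (MvPolynomial σ R)} (hG : ∀ l i, (G l i).totalDegree ≤ d)
    {v : γ × Fin (s + 1) → MvPolynomial τ R}
    (hv : v ∈ syzygySpan (coeffMatrix (G.map θ) (s + 1) (s + d + 1)) D) :
    θ.symm ∘ ofCoeffVec γ _ (s + 1) v ∈ syzygySpan G (s + D) := by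
  let ρ : MvPolynomial τ R →+* MvPolynomial σ R := RingHom.comp θ.symm Polynomial.C
  let Λ : (γ × Fin (s + 1) → MvPolynomial τ R) →ₛₗ[ρ] (γ → MvPolynomial σ R) :=
    { toFun v := θ.symm ∘ ofCoeffVec γ _ (s + 1) v
      map_add' v w := funext fun i =>
        (congrArg θ.symm (congrFun (map_add _ v w) i)).trans (map_add θ.symm _ _)
      map_smul' a v := funext fun i =>
        (congrArg θ.symm (congrFun (ofCoeffVec_smul a v) i)).trans (map_mul θ.symm _ _) }
  suffices hle : syzygySpan (coeffMatrix (G.map θ) (s + 1) (s + d + 1)) D ≤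
      (syzygySpan G (s + D)).comap Λ from hle hv
  refine Submodule.span_le.2 fun w ⟨hw, hwD⟩ => Submodule.subset_span ⟨?_, fun i => ?_⟩
  · have hGw : G.map θ *ᵥ ofCoeffVec γ _ (s + 1) w = 0 :=
      (mulVec_ofCoeffVec_eq_iff (fun l i => (hθ.natDegree_le _).trans (hG l i))
        (w := 0) (by simp) w).1 (hw.trans (map_zero _).symm)
    refine (mulVec_symm_comp θ G _).trans (funext fun l => ?_)
    rw [hGw]
    exact map_zero θ.symm
  · change (θ.symm (ofCoeffVec γ _ (s + 1) w i)).totalDegree ≤ s + D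
    rw [ofCoeffVec_apply, map_sum]
    refine totalDegree_finsetSum_le fun t _ =>
      (hθ.totalDegree_symm_monomial_le _ _).trans ?_
    exact (add_le_add (hwD (i, t)) (Nat.le_of_lt_succ t.2)).trans_eq (add_comm D s)

/-- The degree bound for generators of the syzygies of a matrix with `p` rows and entries of degree
at most `d` in the given number of variables. -/
def syzBound (d : ℕ) : ℕ → ℕ → ℕ
  | 0, _ => 0
  | n + 1, p => (p + 1) * d + syzBound d n (stepSize d p)

theorem mem_syzygySpan_syzBound {k : Type*} [Field k] [Infinite k] {n p : ℕ} {κ : Type}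
    [Fintype κ] {G : Matrix κ γ (MvPolynomial (Fin n) k)} (hp : Fintype.card κ ≤ p)
    (hG : ∀ l i, (G l i).totalDegree ≤ d) {c : γ → MvPolynomial (Fin n) k} (hc : G *ᵥ c = 0) :
    c ∈ syzygySpan G (syzBound d n p) := by
  classical
  induction n generalizing κ γ p with
  | zero =>
    refine Submodule.subset_span ⟨hc, fun i => ?_⟩
    rw [eq_C_of_isEmpty (c i), totalDegree_C]
    exact Nat.zero_le _
  | succ n ih =>
    obtain ⟨r, hr, L, j, θ, hθ, hu, hL⟩ := exists_minor_isUnit_leadingCoeff G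
    set H := G.submatrix L id
    have hH : ∀ l i, (H l i).totalDegree ≤ d := fun l i => hG (L l) i
    have hle : syzygySpan H (syzBound d (n + 1) p) ≤ syzygySpan G _ :=
      Submodule.span_mono fun c' h => ⟨hL c' h.1, h.2⟩
    have hcθ : H.map θ *ᵥ (θ ∘ c) = 0 := by
      rw [map_mulVec_comp]
      exact funext fun l => (congrArg θ (congrFun hc (L l))).trans (map_zero θ)
    have hrp : (Fintype.card (Fin r) + 1) * d ≤ (p + 1) * d := by
      rw [Fintype.card_fin]
      exact Nat.mul_le_mul_right d (Nat.succ_le_succ (hr.trans hp))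
    obtain ⟨q, v, hqv, hv⟩ := exists_coeffMatrix_mulVec_eq (G := H.map θ)
      (e := (p + 1) * d + d + 1) (fun l i => (hθ.natDegree_le _).trans (hH l i)) hu hrp
      (c := θ ∘ c) (fun l => by simp [hcθ])
    rw [hcθ, map_zero] at hv
    have hmap : (cramerSyzygy H j).map θ = cramerSyzygy (H.map θ) j :=
      map_cramerSyzygy (θ : MvPolynomial (Fin (n + 1)) k →+* Polynomial (MvPolynomial (Fin n) k))
        H j
    have hcqv : c = cramerSyzygy H j *ᵥ (θ.symm ∘ q) + θ.symm ∘ ofCoeffVec γ _ _ v := by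
      rw [mulVec_symm_comp, hmap]
      funext i
      rw [← θ.symm_apply_apply (c i)]
      exact (congrArg θ.symm (congrFun hqv i)).trans (map_add θ.symm _ _)
    refine hle (hcqv ▸ add_mem ?_ ?_)
    · exact mulVec_mem_syzygySpan (mul_cramerSyzygy H j) (fun a b =>
        (totalDegree_cramerSyzygy_le hH j a b).trans (hrp.trans (Nat.le_add_right _ _))) _
    · refine symm_comp_ofCoeffVec_mem_syzygySpan hθ hH (ih ?_ (totalDegree_coeffMatrix_le hθ hH) hv)
      simpa only [Fintype.card_prod, Fintype.card_fin, stepSize] using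
        Nat.mul_le_mul_right _ (hr.trans hp)

end Syzygies

section Saturation

open Polynomial

variable {k A N γ : Type*} [CommRing A]

theorem exists_mem_forall_smul_eq_zero [AddCommGroup N] [Module A N] [Module.Finite A N]
    {M : Submonoid A} (h : Module.IsTorsion' N M) : ∃ a ∈ M, ∀ v : N, a • v = 0 := by
  obtain ⟨T, hT⟩ := Module.finite_def.1 ‹Module.Finite A N›
  choose a ha using fun v => @h v
  refine ⟨∏ v ∈ T, (a v : A), Submonoid.prod_mem _ fun v _ => (a v).2, ?_⟩
  suffices hle : Submodule.span A T ≤ LinearMap.ker (LinearMap.lsmul A N (∏ v ∈ T, (a v : A))) by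
    exact fun v => hle (hT ▸ Submodule.mem_top)
  refine Submodule.span_le.2 fun v hv => ?_
  obtain ⟨b, hb⟩ := Finset.dvd_prod_of_mem (fun v => (a v : A)) hv
  rw [SetLike.mem_coe, LinearMap.mem_ker, LinearMap.lsmul_apply, hb, mul_comm, mul_smul]
  exact (congrArg _ (ha v)).trans (smul_zero b)

theorem map_span_range_eq_range_replicateRow [Fintype γ] (g : γ → A) :
    Submodule.map (LinearEquiv.funUnique Unit A A).symm.toLinearMap (Ideal.span (Set.range g)) =
      LinearMap.range (Matrix.replicateRow Unit g).mulVecLin := by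
  rw [Matrix.range_mulVecLin, Ideal.span, Submodule.map_span, ← Set.range_comp]
  rfl

theorem embedsInCokernel_replicateRow [Fintype γ] (g : γ → A)
    (P : Submodule A (A ⧸ Ideal.span (Set.range g))) :
    EmbedsInCokernel (RingHom.id A) P (Matrix.replicateRow Unit g) := by
  let e := Submodule.Quotient.equiv _ _ (LinearEquiv.funUnique Unit A A).symm
    (map_span_range_eq_range_replicateRow g)
  let φ := e.toLinearMap ∘ₗ P.subtype
  exact ⟨φ.toAddMonoidHom, e.injective.comp P.subtype_injective, φ.map_smul⟩

variable [Field k] [Algebra k A]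

/-- The saturation of `I` by the multiplicative set of the elements `s(x)`, for `s ≠ 0` a polynomial
over `k`. -/
noncomputable def polynomialSaturation (k : Type*) [Field k] [Algebra k A] (x : A)
    (I : Ideal A) : Ideal A :=
  (Submodule.torsion' A (A ⧸ I) ((nonZeroDivisors k[X]).map (aeval x))).comap I.mkQ

theorem mem_polynomialSaturation {x a : A} {I : Ideal A} :
    a ∈ polynomialSaturation k x I ↔ ∃ s : k[X], s ≠ 0 ∧ aeval x s * a ∈ I := by
  rw [polynomialSaturation, Submodule.mem_comap, Submodule.mem_torsion'_iff]
  constructor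
  · rintro ⟨⟨_, s, hs, rfl⟩, hsa⟩
    exact ⟨s, nonZeroDivisors.ne_zero hs, (Submodule.Quotient.mk_eq_zero I).1 hsa⟩
  · rintro ⟨s, hs, hsa⟩
    exact ⟨⟨_, s, mem_nonZeroDivisors_of_ne_zero hs, rfl⟩, (Submodule.Quotient.mk_eq_zero I).2 hsa⟩

theorem le_polynomialSaturation {x : A} {I : Ideal A} : I ≤ polynomialSaturation k x I :=
  fun _ ha => mem_polynomialSaturation.2 ⟨1, one_ne_zero, I.mul_mem_left _ ha⟩

theorem exists_polynomialSaturation_eq_colon [IsAlgClosed k] {n d : ℕ} [Finite γ]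
    {g : γ → MvPolynomial (Fin n) k} (hg : ∀ i, (g i).totalDegree ≤ d)
    (x : MvPolynomial (Fin n) k) :
    ∃ f : k[X], f.natDegree ≤ torBound d n 1 ∧
      polynomialSaturation k x (Ideal.span (Set.range g)) =
        (Ideal.span (Set.range g)).colon {aeval x f} := by
  cases nonempty_fintype γ
  set I := Ideal.span (Set.range g)
  set M := (nonZeroDivisors k[X]).map (aeval x)
  let N := Submodule.torsion' (MvPolynomial (Fin n) k) (MvPolynomial (Fin n) k ⧸ I) M
  obtain ⟨_, ⟨s, hs, rfl⟩, hsN⟩ := exists_mem_forall_smul_eq_zero (N := N)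
    (Submodule.torsion'_isTorsion' M)
  obtain ⟨f, hf0, hfd, hf⟩ := EmbedsInCokernel.exists_natDegree_le_torBound (p := 1)
    (ψ := AlgHom.id k _) (embedsInCokernel_replicateRow g N) (by simp) (fun _ => hg)
    (nonZeroDivisors.ne_zero hs) hsN
  refine ⟨f, hfd, le_antisymm (fun a ha => ?_) fun a ha => ?_⟩
  · rw [Submodule.mem_colon_singleton, smul_eq_mul, mul_comm]
    exact (Submodule.Quotient.mk_eq_zero I).1 (congrArg Subtype.val (hf ⟨_, ha⟩))
  · rw [Submodule.mem_colon_singleton, smul_eq_mul, mul_comm] at ha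
    exact mem_polynomialSaturation.2 ⟨f, hf0, ha⟩

end Saturation

section BoundedGeneration

open MvPolynomial

variable {R k σ : Type*} [CommRing R] [Field k] {n d D : ℕ}

/-- The ideal `J` is generated by polynomials of total degree at most `D`, expressed as an inclusion
in the span of all its elements of that degree. -/
def GeneratedInDegreeLE (J : Ideal (MvPolynomial σ R)) (D : ℕ) : Prop :=
  J ≤ Ideal.span {g | g ∈ J ∧ g.totalDegree ≤ D}

theorem GeneratedInDegreeLE.mono {J : Ideal (MvPolynomial σ R)} {D' : ℕ}
    (h : GeneratedInDegreeLE J D) (hD : D ≤ D') : GeneratedInDegreeLE J D' :=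
  h.trans (Ideal.span_mono fun _ hg => ⟨hg.1, hg.2.trans hD⟩)

theorem GeneratedInDegreeLE.span_eq {J : Ideal (MvPolynomial σ R)} (h : GeneratedInDegreeLE J D) :
    Ideal.span {g | g ∈ J ∧ g.totalDegree ≤ D} = J :=
  le_antisymm (Ideal.span_le.2 fun _ hg => hg.1) h

theorem generatedInDegreeLE_colon [Infinite k] {γ : Type*} [Finite γ]
    {g : γ → MvPolynomial (Fin n) k} (hg : ∀ i, (g i).totalDegree ≤ d)
    {b : MvPolynomial (Fin n) k} (hb : b.totalDegree ≤ d) :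
    GeneratedInDegreeLE ((Ideal.span (Set.range g)).colon {b}) (syzBound d n 1) := by
  cases nonempty_fintype γ
  -- The colon ideal consists of the first entries of the syzygies of the row `(b, -g)`.
  let G : Matrix Unit (Option γ) (MvPolynomial (Fin n) k) :=
    Matrix.replicateRow Unit fun o => o.elim b fun i => -g i
  have hG (c : Option γ → MvPolynomial (Fin n) k) :
      G.mulVec c = 0 ↔ ∑ i, c (some i) * g i = c none * b := by
    rw [eq_comm (b := c none * b)]
    simp [funext_iff, G, Matrix.mulVec, dotProduct, Fintype.sum_option, ← sub_eq_add_neg,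
      sub_eq_zero, mul_comm]
  have hGd : ∀ l o, (G l o).totalDegree ≤ d := by
    rintro l (_ | i)
    · exact hb
    · exact (totalDegree_neg (g i)).trans_le (hg i)
  have hfirst : syzygySpan G (syzBound d n 1) ≤ Submodule.comap
      (LinearMap.proj none : (Option γ → MvPolynomial (Fin n) k) →ₗ[MvPolynomial (Fin n) k] _)
      (Ideal.span {a | a ∈ (Ideal.span (Set.range g)).colon {b} ∧
        a.totalDegree ≤ syzBound d n 1}) :=
    Submodule.span_le.2 fun c ⟨hc, hcd⟩ => Submodule.subset_span
      ⟨Submodule.mem_colon_singleton.2 (Ideal.mem_span_range_iff_exists_fun.2 ⟨_, (hG c).1 hc⟩),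
        hcd none⟩
  intro a ha
  obtain ⟨c, hc⟩ := Ideal.mem_span_range_iff_exists_fun.1 (Submodule.mem_colon_singleton.1 ha)
  exact hfirst (mem_syzygySpan_syzBound (c := fun o => o.elim a c) (by simp) hGd ((hG _).2 hc))

theorem totalDegree_aeval_X_le (i : σ) (f : Polynomial k) :
    (Polynomial.aeval (X i : MvPolynomial σ k) f).totalDegree ≤ f.natDegree := by
  rw [Polynomial.aeval_eq_sum_range]
  refine totalDegree_finsetSum_le fun t ht => (totalDegree_smul_le _ _).trans ?_
  exact (totalDegree_X_pow i t).trans_le (Nat.lt_succ_iff.1 (Finset.mem_range.1 ht))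

theorem generatedInDegreeLE_polynomialSaturation_of_isAlgClosed [IsAlgClosed k] {e : ℕ}
    (hde : d ≤ e) (hte : torBound d n 1 ≤ e) (i : Fin n) {S : Set (MvPolynomial (Fin n) k)}
    (hS : ∀ g ∈ S, g.totalDegree ≤ d) :
    GeneratedInDegreeLE (polynomialSaturation k (X i) (Ideal.span S)) (syzBound e n 1) := by
  have : Infinite k := IsAlgClosed.instInfinite
  obtain ⟨F, hFS, hF⟩ := (Submodule.fg_span_iff_fg_span_finset_subset S).1
    (IsNoetherian.noetherian (Ideal.span S))
  have hspan : Ideal.span S = Ideal.span (Set.range ((↑) : F → MvPolynomial (Fin n) k)) :=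
    hF.trans (by rw [Subtype.range_coe])
  have hFd (g : F) : g.1.totalDegree ≤ d := hS g (hFS g.2)
  obtain ⟨f, hfd, hf⟩ := exists_polynomialSaturation_eq_colon hFd (X i)
  rw [hspan, hf]
  exact generatedInDegreeLE_colon (fun g => (hFd g).trans hde)
    ((totalDegree_aeval_X_le i f).trans (hfd.trans hte))

end BoundedGeneration

section Descent

open MvPolynomial

attribute [local instance] MvPolynomial.algebraMvPolynomial

variable {R R' σ : Type*} [CommRing R] [CommRing R'] [Algebra R R']

/-- Coefficientwise application of an `R`-linear form on `R'` to polynomials over `R'`. -/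
noncomputable def mapCoeff (l : R' →ₗ[R] R) :
    MvPolynomial σ R' →ₗ[MvPolynomial σ R] MvPolynomial σ R where
  toFun a := AddMonoidAlgebra.map l.toAddMonoidHom a
  map_add' a b := by
    ext m
    exact l.map_add _ _
  map_smul' b a := by
    classical
    ext m
    rw [Algebra.smul_def b a, algebraMap_def]
    simp only [coeff_addMonoidAlgebraMap, coeff_mul, map_sum, coeff_map,
      LinearMap.toAddMonoidHom_coe, ← Algebra.smul_def, map_smul, smul_eq_mul, RingHom.id_apply]

theorem coeff_mapCoeff (l : R' →ₗ[R] R) (a : MvPolynomial σ R') (m : σ →₀ ℕ) :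
    (mapCoeff l a).coeff m = l (a.coeff m) :=
  rfl

theorem mapCoeff_map_mul (l : R' →ₗ[R] R) (b : MvPolynomial σ R) (a : MvPolynomial σ R') :
    mapCoeff l (map (algebraMap R R') b * a) = b * mapCoeff l a := by
  rw [← algebraMap_def, ← Algebra.smul_def, map_smul, smul_eq_mul]

theorem mapCoeff_C_mul (l : R' →ₗ[R] R) (c : R') (a : MvPolynomial σ R') :
    mapCoeff l (C c * a) = mapCoeff (l ∘ₗ LinearMap.mulLeft R c) a := by
  ext m
  rw [coeff_mapCoeff, coeff_C_mul]
  rfl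

theorem totalDegree_mapCoeff_le (l : R' →ₗ[R] R) (a : MvPolynomial σ R') :
    (mapCoeff l a).totalDegree ≤ a.totalDegree := by
  refine Finset.sup_mono fun m => ?_
  rw [mem_support_iff, mem_support_iff, coeff_mapCoeff]
  exact mt fun h => by rw [h, map_zero]

theorem mapCoeff_mul_mem {J : Ideal (MvPolynomial σ R)} {a : MvPolynomial σ R'}
    (ha : ∀ l : R' →ₗ[R] R, mapCoeff l a ∈ J) (b : MvPolynomial σ R') (l : R' →ₗ[R] R) :
    mapCoeff l (b * a) ∈ J := by
  induction b using MvPolynomial.induction_on with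
  | C c => exact mapCoeff_C_mul l c a ▸ ha _
  | add b c hb hc =>
    rw [add_mul, map_add]
    exact J.add_mem hb hc
  | mul_X b i hb =>
    rw [mul_right_comm, ← map_X (algebraMap R R'), mul_comm, mapCoeff_map_mul]
    exact J.mul_mem_left _ hb

theorem mapCoeff_mem_of_mem_span {U : Set (MvPolynomial σ R')} {J : Ideal (MvPolynomial σ R)}
    (hU : ∀ u ∈ U, ∀ l : R' →ₗ[R] R, mapCoeff l u ∈ J) {a : MvPolynomial σ R'}
    (ha : a ∈ Ideal.span U) (l : R' →ₗ[R] R) : mapCoeff l a ∈ J := by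
  induction ha using Submodule.span_induction generalizing l with
  | mem u hu => exact hU u hu l
  | zero =>
    rw [map_zero]
    exact J.zero_mem
  | add a b _ _ ha hb =>
    rw [map_add]
    exact J.add_mem (ha l) (hb l)
  | smul c a _ ha => exact mapCoeff_mul_mem ha c l

theorem mapCoeff_mem_span {S : Set (MvPolynomial σ R)} {a : MvPolynomial σ R'}
    (ha : a ∈ Ideal.span (map (algebraMap R R') '' S)) (l : R' →ₗ[R] R) :
    mapCoeff l a ∈ Ideal.span S := by
  refine mapCoeff_mem_of_mem_span ?_ ha l
  rintro _ ⟨g, hg, rfl⟩ l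
  rw [← mul_one (map (algebraMap R R') g), mapCoeff_map_mul]
  exact Ideal.mul_mem_right _ _ (Ideal.subset_span hg)

theorem map_aeval_X (s : Polynomial R) (i : σ) :
    map (algebraMap R R') (Polynomial.aeval (X i) s) =
      Polynomial.aeval (X i) (s.map (algebraMap R R')) := by
  rw [Polynomial.aeval_map_algebraMap, ← map_X (algebraMap R R') i]
  exact (Polynomial.aeval_algHom_apply (mapAlgHom (Algebra.ofId R R')) (X i) s).symm

variable {k K : Type*} [Field k] [Field K] [Algebra k K]
  {S : Set (MvPolynomial σ k)} {i : σ}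

theorem map_mem_polynomialSaturation {a : MvPolynomial σ k}
    (ha : a ∈ polynomialSaturation k (X i) (Ideal.span S)) :
    map (algebraMap k K) a ∈
      polynomialSaturation K (X i) (Ideal.span (map (algebraMap k K) '' S)) := by
  obtain ⟨s, hs, hsa⟩ := mem_polynomialSaturation.1 ha
  refine mem_polynomialSaturation.2 ⟨s.map (algebraMap k K), Polynomial.map_ne_zero hs, ?_⟩
  rw [← map_aeval_X, ← map_mul, ← Ideal.map_span]
  exact Ideal.mem_map_of_mem _ hsa

variable [Algebra.IsAlgebraic k K]

theorem mapCoeff_mem_polynomialSaturation {a : MvPolynomial σ K}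
    (ha : a ∈ polynomialSaturation K (X i) (Ideal.span (map (algebraMap k K) '' S)))
    (l : K →ₗ[k] k) : mapCoeff l a ∈ polynomialSaturation k (X i) (Ideal.span S) := by
  obtain ⟨t, ht, hta⟩ := mem_polynomialSaturation.1 ha
  obtain ⟨s, hs, q, hq⟩ := Polynomial.exists_dvd_map_of_isAlgebraic (R := k) ht
  refine mem_polynomialSaturation.2 ⟨s, hs, ?_⟩
  rw [← mapCoeff_map_mul, map_aeval_X, hq, map_mul (Polynomial.aeval _), mul_right_comm]
  exact mapCoeff_mem_span (Ideal.mul_mem_right _ _ hta) l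

theorem GeneratedInDegreeLE.of_map_algebraMap {D : ℕ}
    (h : GeneratedInDegreeLE
      (polynomialSaturation K (X i) (Ideal.span (map (algebraMap k K) '' S))) D) :
    GeneratedInDegreeLE (polynomialSaturation k (X i) (Ideal.span S)) D := by
  intro a ha
  obtain ⟨l, hl⟩ := (Algebra.linearMap k K).exists_leftInverse_of_injective
    (LinearMap.ker_eq_bot.2 (algebraMap k K).injective)
  have hla : mapCoeff l (map (algebraMap k K) a) = a := by
    ext m
    rw [coeff_mapCoeff, coeff_map]
    exact LinearMap.congr_fun hl _
  rw [← hla]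
  refine mapCoeff_mem_of_mem_span ?_ (h (map_mem_polynomialSaturation ha)) l
  exact fun u ⟨hu, hud⟩ l => Submodule.subset_span
    ⟨mapCoeff_mem_polynomialSaturation hu l, (totalDegree_mapCoeff_le l u).trans hud⟩

end Descent

section Numerics

variable {d p : ℕ}

theorem four_mul_le_stepSize (hd : 1 ≤ d) (hp : 1 ≤ p) : 4 * p ≤ stepSize d p := by
  rw [stepSize]
  nlinarith [Nat.mul_le_mul hp hd]

theorem four_mul_stepSize_mul_le (hd : 1 ≤ d) (hp : 1 ≤ p) :
    4 * (stepSize d p * d) ≤ (4 * (p * d)) ^ 2 := by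
  have h : (p + 1) * d + d + 1 ≤ 4 * (p * d) := by nlinarith [Nat.mul_le_mul hp hd]
  calc 4 * (stepSize d p * d) = 4 * (p * d) * ((p + 1) * d + d + 1) := by rw [stepSize]; ring
    _ ≤ 4 * (p * d) * (4 * (p * d)) := Nat.mul_le_mul_left _ h
    _ = (4 * (p * d)) ^ 2 := (sq _).symm

theorem stepSize_pow_two_pow_le (n : ℕ) (hd : 1 ≤ d) (hp : 1 ≤ p) :
    (4 * (stepSize d p * d)) ^ 2 ^ n ≤ (4 * (p * d)) ^ 2 ^ (n + 1) := by
  rw [pow_succ', pow_mul]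
  exact Nat.pow_le_pow_left (four_mul_stepSize_mul_le hd hp) _

theorem torBound_add_le (n : ℕ) (hd : 1 ≤ d) (hp : 1 ≤ p) :
    torBound d n p + p ≤ (4 * (p * d)) ^ 2 ^ n := by
  induction n generalizing p with
  | zero =>
    rw [torBound, pow_zero, pow_one]
    nlinarith
  | succ n ih =>
    have h4 := four_mul_le_stepSize hd hp
    calc torBound d (n + 1) p + p ≤ torBound d n (stepSize d p) + stepSize d p := by
          rw [torBound]; lia
      _ ≤ (4 * (stepSize d p * d)) ^ 2 ^ n := ih (by lia)
      _ ≤ (4 * (p * d)) ^ 2 ^ (n + 1) := stepSize_pow_two_pow_le n hd hp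

theorem syzBound_add_le (n : ℕ) (hd : 1 ≤ d) (hp : 1 ≤ p) :
    syzBound d n p + 2 * (p * d) ≤ (4 * (p * d)) ^ 2 ^ n := by
  induction n generalizing p with
  | zero =>
    rw [syzBound, pow_zero, pow_one]
    lia
  | succ n ih =>
    have h4 := four_mul_le_stepSize hd hp
    calc syzBound d (n + 1) p + 2 * (p * d)
        ≤ syzBound d n (stepSize d p) + 2 * (stepSize d p * d) := by
          rw [syzBound]
          nlinarith [Nat.mul_le_mul_right d h4, Nat.mul_le_mul_right d hp]
      _ ≤ (4 * (stepSize d p * d)) ^ 2 ^ n := ih (by lia)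
      _ ≤ (4 * (p * d)) ^ 2 ^ (n + 1) := stepSize_pow_two_pow_le n hd hp

theorem torBound_one_le (n : ℕ) (hd : 1 ≤ d) : torBound d n 1 ≤ (4 * d) ^ 2 ^ n := by
  have h := torBound_add_le n hd le_rfl
  rw [one_mul] at h
  lia

theorem syzBound_one_le (n : ℕ) (hd : 1 ≤ d) : syzBound d n 1 ≤ (4 * d) ^ 2 ^ n := by
  have h := syzBound_add_le n hd le_rfl
  rw [one_mul] at h
  lia

theorem four_mul_pow_two_pow_pow_le {n : ℕ} (hn : 1 ≤ n) (hd : 2 ≤ d) :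
    (4 * (4 * d) ^ 2 ^ n) ^ 2 ^ n ≤ 2 ^ (n * 2 ^ (n + 3)) * d ^ (n * 2 ^ (2 * n + 1)) := by
  obtain ⟨m, hm⟩ : ∃ m, m = 2 ^ n := ⟨_, rfl⟩
  have hexp : 2 ^ (2 * n + 1) = 2 * m ^ 2 ∧ 2 ^ (n + 3) = 8 * m := by
    constructor <;> rw [hm] <;> ring
  have hlhs : (4 * (4 * d) ^ m) ^ m = 2 ^ (2 * m) * (2 ^ (2 * m ^ 2) * d ^ m ^ 2) := by
    rw [mul_pow, ← pow_mul, mul_pow, show (4 : ℕ) = 2 ^ 2 by norm_num, ← pow_mul, ← pow_mul, sq m]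
  rw [hexp.1, hexp.2, ← hm, hlhs]
  obtain rfl | hn2 := hn.eq_or_lt
  · rw [hm, ← mul_assoc, ← pow_add]
    gcongr <;> lia
  · have hpow : 2 ^ (2 * m ^ 2) * d ^ m ^ 2 ≤ d ^ (n * (2 * m ^ 2)) :=
      calc 2 ^ (2 * m ^ 2) * d ^ m ^ 2 ≤ d ^ (2 * m ^ 2) * d ^ m ^ 2 := by gcongr
        _ = d ^ (2 * m ^ 2 + m ^ 2) := (pow_add _ _ _).symm
        _ ≤ d ^ (n * (2 * m ^ 2)) := Nat.pow_le_pow_right (by lia) (by nlinarith)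
    exact Nat.mul_le_mul (Nat.pow_le_pow_right two_pos (by nlinarith)) hpow

end Numerics

section DegreeOne

open MvPolynomial

variable {R B k σ : Type*} [CommRing R] [CommRing B] [Algebra R B] [Field k]

theorem aeval_eq_of_totalDegree_le_one {f : MvPolynomial σ R →ₗ[R] B} (hf : f 1 = 1)
    {g : MvPolynomial σ R} (hg : g.totalDegree ≤ 1) : aeval (fun i => f (X i)) g = f g := by
  rw [as_sum g, map_sum, map_sum]
  refine Finset.sum_congr rfl fun m hm => ?_
  rw [← mul_one (coeff m g), ← smul_eq_mul, ← smul_monomial, map_smul, map_smul]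
  congr 1
  obtain h | h := Nat.le_one_iff_eq_zero_or_eq_one.1 ((le_totalDegree hm).trans hg)
  · obtain rfl := (Finsupp.degree_eq_zero_iff m).1 h
    exact (map_one _).trans hf.symm
  · obtain ⟨i, rfl⟩ := (Finsupp.sum_eq_one_iff m).1 h
    exact aeval_X _ i

theorem exists_linearMap_mvPolynomial_lift {Q : Type*} [AddCommGroup Q] [Module k Q] {v : Q}
    (hv : v ≠ 0) (B : Type*) [CommRing B] [Algebra k B] :
    ∃ (ι : Set Q) (f : Q →ₗ[k] MvPolynomial ι k), f v = 1 ∧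
      ∀ θ : Q →ₗ[k] B, θ v = 1 → ∃ μ : MvPolynomial ι k →ₐ[k] B, ∀ q, μ (f q) = θ q := by
  classical
  have hli : LinearIndepOn k id {v} := .singleton hv
  obtain ⟨ι, b, i, hi⟩ : ∃ (ι : Set Q) (b : Module.Basis ι k Q) (i : ι), b i = v :=
    ⟨_, .extend hli, ⟨v, Module.Basis.subset_extend hli rfl⟩,
      Module.Basis.extend_apply_self hli _⟩
  let f : Q →ₗ[k] MvPolynomial ι k := b.constr k fun j => if j = i then 1 else X j
  have hf (j) : f (b j) = if j = i then 1 else X j := b.constr_basis k _ j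
  have hfv : f v = 1 := by rw [← hi, hf, if_pos rfl]
  refine ⟨_, f, hfv, fun θ hθ => ⟨aeval fun j => θ (b j), ?_⟩⟩
  suffices h : (aeval fun j => θ (b j)).toLinearMap ∘ₗ f = θ from LinearMap.congr_fun h
  refine b.ext fun j => ?_
  rw [LinearMap.comp_apply, AlgHom.toLinearMap_apply, hf]
  obtain rfl | hj := eq_or_ne j i
  · rw [if_pos rfl, map_one, hi, hθ]
  · rw [if_neg hj, aeval_X]

theorem isPrime_span_of_totalDegree_le_one {S : Set (MvPolynomial σ k)}
    (hS : ∀ g ∈ S, g.totalDegree ≤ 1) (hne : Ideal.span S ≠ ⊤) : (Ideal.span S).IsPrime := by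
  set I := Ideal.span S
  let W : Submodule k (MvPolynomial σ k) := Submodule.span k S
  have hWI : W ≤ I.restrictScalars k := Submodule.span_le.2 Ideal.subset_span
  have hone : W.mkQ 1 ≠ 0 := fun h =>
    hne ((Ideal.eq_top_iff_one I).2 (hWI ((Submodule.Quotient.mk_eq_zero W).1 h)))
  obtain ⟨ι, f, hf, hlift⟩ :=
    exists_linearMap_mvPolynomial_lift (k := k) hone (MvPolynomial σ k ⧸ I)
  let θ := W.liftQ (Ideal.Quotient.mkₐ k I).toLinearMap fun _ h =>
    Ideal.Quotient.eq_zero_iff_mem.2 (hWI h)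
  obtain ⟨μ, hμ⟩ := hlift θ (map_one (Ideal.Quotient.mk I))
  let φ : MvPolynomial σ k →ₐ[k] MvPolynomial ι k := aeval fun i => f (W.mkQ (X i))
  have hφS : S ⊆ RingHom.ker φ := fun g hg => by
    have hg0 : W.mkQ g = 0 := (Submodule.Quotient.mk_eq_zero W).2 (Submodule.subset_span hg)
    have hφg : φ g = f (W.mkQ g) :=
      aeval_eq_of_totalDegree_le_one (f := f ∘ₗ W.mkQ) hf (hS g hg)
    exact hφg.trans (by rw [hg0, map_zero])
  have hμφ : μ.comp φ = Ideal.Quotient.mkₐ k I := algHom_ext fun i => by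
    rw [AlgHom.comp_apply, aeval_X, hμ]
    rfl
  have hker : RingHom.ker φ = I := by
    refine le_antisymm (fun a ha => ?_) (Ideal.span_le.2 hφS)
    refine Ideal.Quotient.eq_zero_iff_mem.1 ((AlgHom.congr_fun hμφ a).symm.trans ?_)
    rw [AlgHom.comp_apply, RingHom.mem_ker.1 ha, map_zero]
  exact hker ▸ RingHom.ker_isPrime φ

theorem polynomialSaturation_eq_self_or_eq_top {A : Type*} [CommRing A] [Algebra k A] {x : A}
    {I : Ideal A} [hI : I.IsPrime] :
    polynomialSaturation k x I = I ∨ polynomialSaturation k x I = ⊤ := by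
  refine or_iff_not_imp_right.2 fun hne =>
    le_antisymm (fun a ha => ?_) le_polynomialSaturation
  obtain ⟨s, hs, hsa⟩ := mem_polynomialSaturation.1 ha
  refine (hI.mem_or_mem hsa).resolve_left fun hsI => hne ((Ideal.eq_top_iff_one _).2 ?_)
  exact mem_polynomialSaturation.2 ⟨s, hs, I.mul_mem_right _ hsI⟩

theorem generatedInDegreeLE_span {S : Set (MvPolynomial σ R)} {D : ℕ}
    (hS : ∀ g ∈ S, g.totalDegree ≤ D) : GeneratedInDegreeLE (Ideal.span S) D :=
  Ideal.span_mono fun g hg => ⟨Ideal.subset_span hg, hS g hg⟩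

theorem generatedInDegreeLE_top (D : ℕ) :
    GeneratedInDegreeLE (⊤ : Ideal (MvPolynomial σ R)) D := by
  rw [← Ideal.span_singleton_one]
  exact generatedInDegreeLE_span (by simp)

theorem generatedInDegreeLE_polynomialSaturation_one {S : Set (MvPolynomial σ k)}
    (hS : ∀ g ∈ S, g.totalDegree ≤ 1) (x : MvPolynomial σ k) :
    GeneratedInDegreeLE (polynomialSaturation k x (Ideal.span S)) 1 := by
  by_cases hne : Ideal.span S = ⊤
  · have htop : polynomialSaturation k x (Ideal.span S) = ⊤ :=
      top_le_iff.1 (hne.ge.trans le_polynomialSaturation)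
    exact htop ▸ generatedInDegreeLE_top 1
  · have := isPrime_span_of_totalDegree_le_one hS hne
    obtain h | h := polynomialSaturation_eq_self_or_eq_top (k := k) (x := x) (I := Ideal.span S)
    · exact h.symm ▸ generatedInDegreeLE_span hS
    · exact h ▸ generatedInDegreeLE_top 1

end DegreeOne

section ArbitraryField

open MvPolynomial

variable {k : Type*} [Field k] {n d : ℕ}

theorem generatedInDegreeLE_polynomialSaturation (hd : 1 ≤ d) (i : Fin n)
    {S : Set (MvPolynomial (Fin n) k)} (hS : ∀ g ∈ S, g.totalDegree ≤ d) :
    GeneratedInDegreeLE (polynomialSaturation k (X i) (Ideal.span S))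
      ((4 * (4 * d) ^ 2 ^ n) ^ 2 ^ n) := by
  let K := AlgebraicClosure k
  have hde : d ≤ (4 * d) ^ 2 ^ n :=
    (Nat.le_mul_of_pos_left d four_pos).trans (Nat.le_self_pow (by simp) _)
  have hSK : ∀ g ∈ map (algebraMap k K) '' S, g.totalDegree ≤ d := by
    rintro _ ⟨g, hg, rfl⟩
    exact (Finset.sup_mono (support_map_subset _ g)).trans (hS g hg)
  have hK := generatedInDegreeLE_polynomialSaturation_of_isAlgClosed hde (torBound_one_le n hd)
    i hSK
  exact (hK.mono (syzBound_one_le n (hd.trans hde))).of_map_algebraMap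

end ArbitraryField

/-- The saturation of a nonzero ideal generated in degree at most `d`
by the multiplicative set `k[x₁]∖{0}` is generated by polynomials of total degree at most
`2^(n·2^(n+3))·d^(n·2^(2n+1))`. -/
theorem saturation_bounded_generators
    (k : Type*) [Field k] (n d : ℕ) (hn : 1 ≤ n) (hd : 1 ≤ d)
    (I : Ideal (MvPolynomial (Fin n) k)) (hI : I ≠ ⊥)
    (S : Set (MvPolynomial (Fin n) k)) (hgen : I = Ideal.span S)
    (hdeg : ∀ g ∈ S, g.totalDegree ≤ d) :
    ∃ T : Set (MvPolynomial (Fin n) k),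
      (∀ g ∈ T, g.totalDegree ≤ 2 ^ (n * 2 ^ (n + 3)) * d ^ (n * 2 ^ (2 * n + 1))) ∧
      ∀ a : MvPolynomial (Fin n) k, a ∈ Ideal.span T ↔
        ∃ s : Polynomial k, s ≠ 0 ∧
          Polynomial.aeval (MvPolynomial.X (⟨0, hn⟩ : Fin n) :
            MvPolynomial (Fin n) k) s * a ∈ I := by
  subst hgen
  set x : MvPolynomial (Fin n) k := MvPolynomial.X ⟨0, hn⟩
  have hJ : GeneratedInDegreeLE (polynomialSaturation k x (Ideal.span S))
      (2 ^ (n * 2 ^ (n + 3)) * d ^ (n * 2 ^ (2 * n + 1))) := by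
    obtain rfl | hd2 := hd.eq_or_lt
    · rw [one_pow, mul_one]
      exact (generatedInDegreeLE_polynomialSaturation_one hdeg x).mono Nat.one_le_two_pow
    · exact (generatedInDegreeLE_polynomialSaturation hd _ hdeg).mono
        (four_mul_pow_two_pow_pow_le hn hd2)
  refine ⟨{g | g ∈ polynomialSaturation k x (Ideal.span S) ∧ g.totalDegree ≤ _}, fun g hg => hg.2,
    fun a => ?_⟩
  rw [hJ.span_eq]
  exact mem_polynomialSaturation
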